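/- arXiv:math/0408394 — 3 statements merged into one kernel-verified Lean document; each statement's English description precedes it below -/
import Mathlib

section
/- Let A be a noetherian ring such that the localization A_p is equidimensional for every prime p. Then for every prime ideal P of the polynomial ring B = A[T], the localization B_P is equidimensional. -/
set_option synthInstance.maxHeartbeats 1000000
set_option maxHeartbeats 1000000

universe u

/-- A noetherian (local) ring is equidimensional if it has finite Krull dimension
and `dim (R ⧸ q) = dim R` for every minimal prime `q`. -/
def IsEquidimensionalRing (R : Type u) [CommRing R] : Prop :=
  ringKrullDim R < ⊤ ∧ ∀ q ∈ minimalPrimes R, ringKrullDim (R ⧸ q) = ringKrullDim R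

/-!
Equidimensionality of the localization at a prime `p` says that `ht (p / q) = ht p` for every
minimal prime `q ≤ p`. Let `P` be a prime of `A[T]` over `p`. As `A[T]` is flat over `A`, going down
holds; hence a minimal prime of `A[T]` contained in `P` is `q A[T]` for a minimal prime `q ≤ p` of
`A`, and the dimension formula gives
`ht P = ht p + ht (P / p A[T])` and `ht (P / q A[T]) = ht (p / q) + ht (P / p A[T])`:
the fiber contributes the same amount to both heights.
-/

section Localization

variable {R : Type*} [CommRing R] (p : Ideal R) [p.IsPrime]
  (S : Type*) [CommRing S] [Algebra R S] [IsLocalization.AtPrime S p]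

theorem minimalPrimes_eq_image_of_isLocalizationAtPrime :
    minimalPrimes S = Ideal.map (algebraMap R S) '' {q ∈ minimalPrimes R | q ≤ p} := by
  have mem_iff (Q : Ideal S) : Q ∈ minimalPrimes S ↔ Q.under R ∈ minimalPrimes R := by
    have h := IsLocalization.minimalPrimes_map p.primeCompl S (⊥ : Ideal R)
    rw [Ideal.map_bot] at h
    exact Set.ext_iff.mp h Q
  ext Q
  constructor
  · intro hQ
    have := hQ.isPrime
    have hQp : Q.under R ≤ p := (IsLocalization.AtPrime.orderIsoOfPrime S p ⟨Q, this⟩).2.2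
    exact ⟨Q.under R, ⟨(mem_iff Q).mp hQ, hQp⟩, IsLocalization.map_under p.primeCompl S Q⟩
  · rintro ⟨q, ⟨hq, hqp⟩, rfl⟩
    have := hq.isPrime
    rwa [mem_iff, Ideal.under_map_of_isLocalizationAtPrime p hqp]

theorem ringKrullDim_quotient_map_eq_height {I : Ideal R} (hIp : I ≤ p) :
    ringKrullDim (S ⧸ I.map (algebraMap R S)) = (p.map (Ideal.Quotient.mk I)).height := by
  have : (p.map (Ideal.Quotient.mk I)).IsPrime := Ideal.isPrime_map_quotientMk_of_isPrime hIp
  have : (p.map (Ideal.Quotient.mk I)).LiesOver p := ⟨(Ideal.comap_map_mk hIp).symm⟩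
  have : IsLocalization.AtPrime (S ⧸ I.map (algebraMap R S)) (p.map (Ideal.Quotient.mk I)) := by
    rw [IsLocalization.AtPrime, ← Ideal.algebraMapSubmonoid_primeCompl_of_liesOver_surjective
      (p := p) (p.map (Ideal.Quotient.mk I)) Ideal.Quotient.mk_surjective]
    infer_instance
  exact IsLocalization.AtPrime.ringKrullDim_eq_height _ _

theorem isEquidimensionalRing_iff_height_map_quotientMk_eq [p.FiniteHeight] :
    IsEquidimensionalRing S ↔
      ∀ q ∈ minimalPrimes R, q ≤ p → (p.map (Ideal.Quotient.mk q)).height = p.height := by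
  have hdim : ringKrullDim S = p.height := IsLocalization.AtPrime.ringKrullDim_eq_height p S
  have hfin : ringKrullDim S < ⊤ := by
    rw [hdim]
    exact WithBot.coe_lt_coe.mpr Ideal.height_lt_top_of_isPrime
  rw [IsEquidimensionalRing, and_iff_right hfin,
    minimalPrimes_eq_image_of_isLocalizationAtPrime p S, Set.forall_mem_image]
  simp only [Set.mem_ofPred_eq, and_imp]
  refine forall₃_congr fun q _ hqp ↦ ?_
  rw [ringKrullDim_quotient_map_eq_height p S hqp, hdim, WithBot.coe_inj]

end Localization

theorem height_map_quotientMk_map_quotientMk {R : Type*} [CommRing R] {I J : Ideal R}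
    (hIJ : I ≤ J) (K : Ideal R) :
    ((K.map (Ideal.Quotient.mk I)).map
        (Ideal.Quotient.mk (J.map (Ideal.Quotient.mk I)))).height =
      (K.map (Ideal.Quotient.mk J)).height := by
  let e := (DoubleQuot.quotQuotEquivQuotOfLE hIJ).symm
  rw [← e.height_map (K.map (Ideal.Quotient.mk J)), Ideal.map_map, ← Ideal.map_coe e,
    Ideal.map_map]
  rfl

section GoingDown

variable {A B : Type*} [CommRing A] [CommRing B] [Algebra A B] [Algebra.HasGoingDown A B]

theorem under_mem_minimalPrimes {Q : Ideal B} (hQ : Q ∈ minimalPrimes B) :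
    Q.under A ∈ minimalPrimes A := by
  have := hQ.isPrime
  refine ⟨⟨inferInstance, bot_le⟩, fun q ⟨hq, _⟩ hle ↦ ?_⟩
  obtain ⟨Q', hQ'Q, hQ', hQ'q⟩ := Ideal.exists_ideal_le_liesOver_of_le Q hle
  rw [hQ'q.over]
  exact Ideal.comap_mono (hQ.2 ⟨hQ', bot_le⟩ hQ'Q)

theorem hasGoingDown_quotient_map (I : Ideal A) :
    Algebra.HasGoingDown (A ⧸ I) (B ⧸ I.map (algebraMap A B)) where
  exists_ideal_le_liesOver_of_lt {p} _ Q _ hpQ := by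
    let π : A →+* A ⧸ I := Ideal.Quotient.mk I
    let πB : B →+* B ⧸ I.map (algebraMap A B) := Ideal.Quotient.mk _
    have hle : p.comap π ≤ (Q.comap πB).under A := Ideal.comap_mono hpQ.le
    obtain ⟨P, hPQ, _, hPp⟩ := Ideal.exists_ideal_le_liesOver_of_le (Q.comap πB) hle
    have hIP : I.map (algebraMap A B) ≤ P := by
      rw [Ideal.map_le_iff_le_comap, ← Ideal.under_def, ← hPp.over]
      exact Ideal.mk_ker.ge.trans (Ideal.ker_le_comap π)
    refine ⟨P.map πB, Ideal.map_le_iff_le_comap.mpr hPQ,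
      Ideal.isPrime_map_quotientMk_of_isPrime hIP, ⟨?_⟩⟩
    apply Ideal.comap_injective_of_surjective π Ideal.Quotient.mk_surjective
    calc p.comap π = P.under A := hPp.over
      _ = ((P.map πB).comap πB).under A := by rw [Ideal.comap_map_mk hIP]
      _ = ((P.map πB).under (A ⧸ I)).comap π := rfl

theorem height_map_quotientMk_map_eq_add [IsNoetherianRing A] [IsNoetherianRing B]
    {I : Ideal A} (p : Ideal A) [p.IsPrime] (hIp : I ≤ p) (P : Ideal B) [P.IsPrime]
    [P.LiesOver p] :
    (P.map (Ideal.Quotient.mk (I.map (algebraMap A B)))).height =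
      (p.map (Ideal.Quotient.mk I)).height +
        (P.map (Ideal.Quotient.mk (p.map (algebraMap A B)))).height := by
  let p' := p.map (Ideal.Quotient.mk I)
  let P' := P.map (Ideal.Quotient.mk (I.map (algebraMap A B)))
  have hIpB : I.map (algebraMap A B) ≤ p.map (algebraMap A B) := Ideal.map_mono hIp
  have hIP : I.map (algebraMap A B) ≤ P :=
    hIpB.trans (Ideal.map_le_iff_le_comap.mpr (P.over_def p).le)
  have : p'.IsPrime := Ideal.isPrime_map_quotientMk_of_isPrime hIp
  have : P'.IsPrime := Ideal.isPrime_map_quotientMk_of_isPrime hIP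
  have : P'.LiesOver p' := by
    constructor
    apply Ideal.comap_injective_of_surjective _ Ideal.Quotient.mk_surjective
    calc p'.comap (Ideal.Quotient.mk I) = p := Ideal.comap_map_mk hIp
      _ = (P'.comap (Ideal.Quotient.mk _)).under A := by
        rw [Ideal.comap_map_mk hIP, ← P.over_def p]
      _ = (P'.under (A ⧸ I)).comap (Ideal.Quotient.mk I) := rfl
  have := hasGoingDown_quotient_map (B := B) I
  have hfiber : p'.map (algebraMap (A ⧸ I) (B ⧸ I.map (algebraMap A B))) =
      (p.map (algebraMap A B)).map (Ideal.Quotient.mk (I.map (algebraMap A B))) := by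
    rw [Ideal.map_map, Ideal.map_map]
    rfl
  rw [Ideal.height_eq_height_add_of_liesOver_of_hasGoingDown p' P', hfiber,
    height_map_quotientMk_map_quotientMk hIpB]

theorem polynomial_locally_equidimensional_general [IsNoetherianRing A] [IsNoetherianRing B]
    (hprime : ∀ q ∈ minimalPrimes A, (q.map (algebraMap A B)).IsPrime)
    (p : Ideal A) [p.IsPrime] (P : Ideal B) [P.IsPrime] [P.LiesOver p]
    (hp : IsEquidimensionalRing (Localization.AtPrime p)) :
    IsEquidimensionalRing (Localization.AtPrime P) := by
  rw [isEquidimensionalRing_iff_height_map_quotientMk_eq p] at hp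
  rw [isEquidimensionalRing_iff_height_map_quotientMk_eq P]
  intro Q hQ hQP
  have hq : Q.under A ∈ minimalPrimes A := under_mem_minimalPrimes hQ
  have hqp : Q.under A ≤ p := (Ideal.comap_mono hQP).trans (P.over_def p).ge
  have hQ_eq : (Q.under A).map (algebraMap A B) = Q :=
    le_antisymm Ideal.map_comap_le (hQ.2 ⟨hprime _ hq, bot_le⟩ Ideal.map_comap_le)
  calc (P.map (Ideal.Quotient.mk Q)).height
      = (P.map (Ideal.Quotient.mk ((Q.under A).map (algebraMap A B)))).height := by rw [hQ_eq]
    _ = (p.map (Ideal.Quotient.mk (Q.under A))).height +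
          (P.map (Ideal.Quotient.mk (p.map (algebraMap A B)))).height :=
        height_map_quotientMk_map_eq_add p hqp P
    _ = p.height + (P.map (Ideal.Quotient.mk (p.map (algebraMap A B)))).height := by
        rw [hp _ hq hqp]
    _ = P.height := (Ideal.height_eq_height_add_of_liesOver_of_hasGoingDown p P).symm

end GoingDown

/-- If `A` is a noetherian ring all of whose localizations at primes are equidimensional,
then the same is true of the polynomial ring `A[T]`. -/
theorem polynomial_locally_equidimensional
    (A : Type u) [CommRing A] [IsNoetherianRing A]
    (hA : ∀ (p : Ideal A) [p.IsPrime], IsEquidimensionalRing (Localization.AtPrime p)) :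
    ∀ (P : Ideal (Polynomial A)) [P.IsPrime],
      IsEquidimensionalRing (Localization.AtPrime P) := by
  intro P _
  refine polynomial_locally_equidimensional_general (fun q hq ↦ ?_) (P.under A) P (hA _)
  have := hq.isPrime
  exact Ideal.isPrime_map_C_of_isPrime
end

section
/- Let R be a noetherian ring, C• a bounded complex of flat R-modules, and suppose that all cohomology modules H^q(C•) are flat over R. Then for every R-module M and every q, the natural map H^q(C•) ⊗_R M → H^q(C• ⊗_R M) is an isomorphism. -/
set_option synthInstance.maxHeartbeats 1000000
set_option maxHeartbeats 1000000

universe u v w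

open TensorProduct

/-!
If the image `B` of a map `g` is flat, its kernel `Z` stays a submodule after tensoring with `M`;
if moreover `B` stays a submodule of the target, then `Z ⊗ M` is the kernel of `g ⊗ M`, and dividing
by the image of the incoming map identifies `H ⊗ M` with the homology of the tensored maps.

In a bounded above complex the images `Bʲ⁺¹ = im dʲ` are flat by descending induction: in
`0 → Zʲ → Cʲ → Bʲ⁺¹ → 0` and `0 → Bʲ → Zʲ → Hʲ → 0` the two right hand terms are flat, hence so is
the left one. The same two sequences remain exact after tensoring with `M`, so `Bʲ ⊗ M` embeds into
`Cʲ ⊗ M`.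
-/

section FlatQuotient

variable {R A B D : Type*} [CommRing R] [AddCommGroup A] [AddCommGroup B] [AddCommGroup D]
  [Module R A] [Module R B] [Module R D] [Module.Flat R D] {f : A →ₗ[R] B} {g : B →ₗ[R] D}

theorem rTensor_injective_of_exact_of_flat (M : Type*) [AddCommGroup M] [Module R M]
    (hf : Function.Injective f) (hfg : Function.Exact f g) (hg : Function.Surjective g) :
    Function.Injective (f.rTensor M) :=
  (LinearMap.lTensor_inj_iff_rTensor_inj M f).mp
    (LinearMap.lTensor_injective_of_exact_of_flat g hg f hf hfg M)

theorem flat_left_of_exact [Module.Flat R B]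
    (hf : Function.Injective f) (hfg : Function.Exact f g) (hg : Function.Surjective g) :
    Module.Flat R A := by
  rw [Module.Flat.iff_lTensor_preserves_injective_linearMap]
  intro N N' _ _ _ _ φ hφ
  have hcomm : f.rTensor N' ∘ₗ φ.lTensor A = φ.lTensor B ∘ₗ f.rTensor N := by
    rw [LinearMap.rTensor_comp_lTensor, LinearMap.lTensor_comp_rTensor]
  have hinj : Function.Injective (f.rTensor N' ∘ₗ φ.lTensor A) := by
    rw [hcomm]
    exact (Module.Flat.lTensor_preserves_injective_linearMap φ hφ).comp
      (rTensor_injective_of_exact_of_flat N hf hfg hg)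
  exact Function.Injective.of_comp (f := f.rTensor N') hinj

end FlatQuotient

section Subquotient

variable {R B : Type*} [CommRing R] [AddCommGroup B] [Module R B] {p q : Submodule R B}

theorem exact_inclusion_mkQ_comap (hpq : p ≤ q) :
    Function.Exact (Submodule.inclusion hpq) (p.comap q.subtype).mkQ := by
  rw [LinearMap.exact_iff, Submodule.ker_mkQ, Submodule.range_inclusion]

theorem flat_of_flat_subquotient (hpq : p ≤ q) [Module.Flat R q]
    [Module.Flat R (q ⧸ p.comap q.subtype)] : Module.Flat R p :=
  flat_left_of_exact (Submodule.inclusion_injective hpq) (exact_inclusion_mkQ_comap hpq)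
    (Submodule.mkQ_surjective _)

theorem rTensor_subtype_injective_of_flat_subquotient (M : Type*) [AddCommGroup M] [Module R M]
    (hpq : p ≤ q) [Module.Flat R (q ⧸ p.comap q.subtype)]
    (hq : Function.Injective (q.subtype.rTensor M)) :
    Function.Injective (p.subtype.rTensor M) := by
  rw [← Submodule.subtype_comp_inclusion p q hpq, LinearMap.rTensor_comp]
  exact hq.comp (rTensor_injective_of_exact_of_flat M (Submodule.inclusion_injective hpq)
    (exact_inclusion_mkQ_comap hpq) (Submodule.mkQ_surjective _))

end Subquotient

section Kernel

variable {R B D : Type*} [CommRing R] [AddCommGroup B] [AddCommGroup D] [Module R B] [Module R D]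

theorem exact_ker_subtype_rangeRestrict (g : B →ₗ[R] D) :
    Function.Exact (LinearMap.ker g).subtype g.rangeRestrict := by
  rw [LinearMap.exact_iff, LinearMap.ker_rangeRestrict, Submodule.range_subtype]

theorem flat_ker_of_flat_range (g : B →ₗ[R] D) [Module.Flat R B]
    [Module.Flat R (LinearMap.range g)] : Module.Flat R (LinearMap.ker g) :=
  flat_left_of_exact (Submodule.subtype_injective _) (exact_ker_subtype_rangeRestrict g)
    g.surjective_rangeRestrict

variable (M : Type*) [AddCommGroup M] [Module R M] (g : B →ₗ[R] D)

theorem rTensor_ker_subtype_injective [Module.Flat R (LinearMap.range g)] :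
    Function.Injective ((LinearMap.ker g).subtype.rTensor M) :=
  rTensor_injective_of_exact_of_flat M (Submodule.subtype_injective _)
    (exact_ker_subtype_rangeRestrict g) g.surjective_rangeRestrict

theorem exact_rTensor_ker_subtype
    (hrange : Function.Injective ((LinearMap.range g).subtype.rTensor M)) :
    Function.Exact ((LinearMap.ker g).subtype.rTensor M) (g.rTensor M) := by
  have hfactor : g.rTensor M =
      (LinearMap.range g).subtype.rTensor M ∘ₗ g.rangeRestrict.rTensor M :=
    LinearMap.rTensor_comp M (LinearMap.range g).subtype g.rangeRestrict
  rw [hfactor, LinearMap.coe_comp]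
  exact (rTensor_exact M (exact_ker_subtype_rangeRestrict g)
    g.surjective_rangeRestrict).comp_injective _ hrange (map_zero _)

/-- The natural map `ker g ⊗ M → ker (g ⊗ M)`. -/
noncomputable def kernelBaseChange :
    LinearMap.ker g ⊗[R] M →ₗ[R] LinearMap.ker (g.rTensor M) :=
  ((LinearMap.ker g).subtype.rTensor M).codRestrict _ fun z => by
    rw [LinearMap.mem_ker, ← LinearMap.rTensor_comp_apply, LinearMap.comp_ker_subtype,
      LinearMap.rTensor_zero, LinearMap.zero_apply]

theorem kernelBaseChange_bijective [Module.Flat R (LinearMap.range g)]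
    (hrange : Function.Injective ((LinearMap.range g).subtype.rTensor M)) :
    Function.Bijective (kernelBaseChange M g) := by
  refine ⟨fun _ _ h => rTensor_ker_subtype_injective M g (congrArg Subtype.val h), fun y => ?_⟩
  obtain ⟨z, hz⟩ := (exact_rTensor_ker_subtype M g hrange y).mp y.2
  exact ⟨z, Subtype.ext hz⟩

end Kernel

section Homology

variable {R A B D : Type*} [CommRing R] [AddCommGroup A] [AddCommGroup B] [AddCommGroup D]
  [Module R A] [Module R B] [Module R D]

/-- The homology `ker g / im f` at the middle term of `A → B → D`. The condition `g ∘ f = 0` is not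
built in: the submodule divided out is `im f ∩ ker g`. -/
abbrev MiddleHomology (f : A →ₗ[R] B) (g : B →ₗ[R] D) : Type _ :=
  LinearMap.ker g ⧸ (LinearMap.range f).comap (LinearMap.ker g).subtype

variable (M : Type*) [AddCommGroup M] [Module R M] (f : A →ₗ[R] B) (g : B →ₗ[R] D)

/-- The natural map `H ⊗ M → H(f ⊗ M, g ⊗ M)`, `[x] ⊗ m ↦ [x ⊗ m]`, where `H` is the homology of
`A → B → D` at `B`. -/
noncomputable def homologyBaseChange :
    MiddleHomology f g ⊗[R] M →ₗ[R] MiddleHomology (f.rTensor M) (g.rTensor M) :=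
  TensorProduct.lift <|
    Submodule.liftQ _ (TensorProduct.curry (Submodule.mkQ _ ∘ₗ kernelBaseChange M g)) <| by
      rintro x ⟨a, ha⟩
      refine LinearMap.ext fun m => (Submodule.Quotient.mk_eq_zero _).mpr ⟨a ⊗ₜ m, ?_⟩
      exact congrArg (· ⊗ₜ[R] m) ha

theorem homologyBaseChange_comp_rTensor_mkQ :
    homologyBaseChange M f g ∘ₗ (Submodule.mkQ _).rTensor M =
      Submodule.mkQ _ ∘ₗ kernelBaseChange M g :=
  TensorProduct.ext' fun _ _ => rfl

variable {f g}

theorem homologyBaseChange_bijective (hgf : g ∘ₗ f = 0)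
    (hker : Function.Bijective (kernelBaseChange M g)) :
    Function.Bijective (homologyBaseChange M f g) := by
  set π := ((LinearMap.range f).comap (LinearMap.ker g).subtype).mkQ
  have hπ : Function.Surjective (π.rTensor M) :=
    LinearMap.rTensor_surjective M (Submodule.mkQ_surjective _)
  have hcomm (z : LinearMap.ker g ⊗[R] M) :
      homologyBaseChange M f g (π.rTensor M z) = Submodule.Quotient.mk (kernelBaseChange M g z) :=
    LinearMap.congr_fun (homologyBaseChange_comp_rTensor_mkQ M f g) z
  constructor
  · let f' : A →ₗ[R] LinearMap.ker g := f.codRestrict _ (LinearMap.congr_fun hgf)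
    have hπf' : π ∘ₗ f' = 0 :=
      LinearMap.ext fun a => (Submodule.Quotient.mk_eq_zero _).mpr ⟨a, rfl⟩
    have hlift (t : A ⊗[R] M) :
        (kernelBaseChange M g (f'.rTensor M t) : B ⊗[R] M) = f.rTensor M t :=
      (LinearMap.rTensor_comp_apply M (LinearMap.ker g).subtype f' t).symm
    refine (injective_iff_map_eq_zero _).mpr fun y hy => ?_
    obtain ⟨z, rfl⟩ := hπ y
    obtain ⟨t, ht⟩ := (Submodule.Quotient.mk_eq_zero _).mp ((hcomm z).symm.trans hy)
    obtain rfl : f'.rTensor M t = z := hker.injective (Subtype.ext ((hlift t).trans ht))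
    rw [← LinearMap.rTensor_comp_apply, hπf', LinearMap.rTensor_zero, LinearMap.zero_apply]
  · intro y
    obtain ⟨y, rfl⟩ := Submodule.Quotient.mk_surjective _ y
    obtain ⟨z, rfl⟩ := hker.surjective y
    exact ⟨_, hcomm z⟩

end Homology

section BoundedAbove

variable {R : Type*} [CommRing R] {C : ℤ → Type*} [∀ i, AddCommGroup (C i)] [∀ i, Module R (C i)]
  {d : ∀ i, C i →ₗ[R] C (i + 1)}

theorem flat_range_of_flat_cohomology (hdd : ∀ i, d (i + 1) ∘ₗ d i = 0) {b : ℤ}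
    (hb : ∀ i, b < i → Subsingleton (C i)) {n : ℤ} (hflat : ∀ j, n < j → Module.Flat R (C j))
    (hHflat : ∀ j, n ≤ j → Module.Flat R (MiddleHomology (d j) (d (j + 1))))
    (j : ℤ) (hj : n ≤ j) : Module.Flat R (LinearMap.range (d j)) := by
  by_cases hbj : b ≤ j
  · have := hb (j + 1) (by lia)
    infer_instance
  · have := flat_range_of_flat_cohomology hdd hb hflat hHflat (j + 1) (by lia)
    have := hflat (j + 1) (by lia)
    have := hHflat j hj
    have := flat_ker_of_flat_range (d (j + 1))
    exact flat_of_flat_subquotient (LinearMap.range_le_ker_iff.mpr (hdd j))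
termination_by (b - j).toNat

-- `MiddleHomology (d j) (d (j + 1))` is the cohomology in degree `j + 1`, so flatness is assumed in
-- the degrees above `i + 1` to obtain base change in degree `i + 1`.
theorem cohomology_base_change_of_flat_cohomology_general
    (hdd : ∀ i, d (i + 1) ∘ₗ d i = 0) (hbdd : ∃ b : ℤ, ∀ i, b < i → Subsingleton (C i)) (i : ℤ)
    (hflat : ∀ j, i + 1 < j → Module.Flat R (C j))
    (hHflat : ∀ j, i + 1 ≤ j → Module.Flat R (MiddleHomology (d j) (d (j + 1))))
    (M : Type*) [AddCommGroup M] [Module R M] :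
    Function.Bijective (homologyBaseChange M (d i) (d (i + 1))) := by
  obtain ⟨b, hb⟩ := hbdd
  have hrange := flat_range_of_flat_cohomology hdd hb hflat hHflat
  have := hrange (i + 1) le_rfl
  have := hrange (i + 1 + 1) (by lia)
  have := hHflat (i + 1) le_rfl
  have hinj : Function.Injective ((LinearMap.range (d (i + 1))).subtype.rTensor M) :=
    rTensor_subtype_injective_of_flat_subquotient M
      (LinearMap.range_le_ker_iff.mpr (hdd (i + 1)))
      (rTensor_ker_subtype_injective M (d (i + 1 + 1)))
  exact homologyBaseChange_bijective M (hdd i) (kernelBaseChange_bijective M _ hinj)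

end BoundedAbove

/-- Let `R` be a noetherian ring and `C•` a bounded complex of flat `R`-modules (given by
modules `C i` with differentials `d i : C i → C (i+1)` squaring to zero, vanishing outside
a bounded range) all of whose cohomology modules `H^q(C•) = ker (d q) / im (d (q-1))` are
flat over `R`.  Then for every `R`-module `M` and every degree, the natural map
`H^q(C•) ⊗_R M → H^q(C• ⊗_R M)` (determined by `[x] ⊗ m ↦ [x ⊗ m]`) is an isomorphism. -/
theorem cohomology_base_change_of_flat_cohomology
    (R : Type u) [CommRing R] [IsNoetherianRing R]
    (C : ℤ → Type v) [∀ i, AddCommGroup (C i)] [∀ i, Module R (C i)]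
    (d : ∀ i, C i →ₗ[R] C (i + 1))
    (hdd : ∀ i, (d (i + 1)).comp (d i) = 0)
    (hbdd : ∃ a b : ℤ, ∀ i, (i < a ∨ b < i) → Subsingleton (C i))
    (hflat : ∀ i, Module.Flat R (C i))
    (hHflat : ∀ i, Module.Flat R
      ((LinearMap.ker (d (i + 1))) ⧸
        (LinearMap.range (d i)).comap (LinearMap.ker (d (i + 1))).subtype))
    (M : Type w) [AddCommGroup M] [Module R M] (i : ℤ) :
    ∃ e : (((LinearMap.ker (d (i + 1))) ⧸
            (LinearMap.range (d i)).comap (LinearMap.ker (d (i + 1))).subtype) ⊗[R] M)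
            ≃ₗ[R]
          ((LinearMap.ker (LinearMap.rTensor M (d (i + 1)))) ⧸
            (LinearMap.range (LinearMap.rTensor M (d i))).comap
              (LinearMap.ker (LinearMap.rTensor M (d (i + 1)))).subtype),
      ∀ (x : LinearMap.ker (d (i + 1))) (m : M),
        e ((Submodule.Quotient.mk x) ⊗ₜ[R] m) =
          Submodule.Quotient.mk
            ⟨(x : C (i + 1)) ⊗ₜ[R] m, by
              simp [LinearMap.mem_ker, LinearMap.rTensor_tmul,
                LinearMap.mem_ker.mp x.2]⟩ := by
  obtain ⟨_, b, hb⟩ := hbdd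
  exact ⟨LinearEquiv.ofBijective _ <| cohomology_base_change_of_flat_cohomology_general hdd
    ⟨b, fun j hj => hb j (Or.inr hj)⟩ i (fun j _ => hflat j) (fun j _ => hHflat j) M,
    fun _ _ => rfl⟩
end

section
/- Let A be a formally equidimensional (locally quasi-unmixed) noetherian local ring and h ∈ A a nonzerodivisor. Then every associated prime of the integral closure of the ideal hA is a minimal prime of hA. In particular, if B denotes the integral closure of A in its total quotient ring and is finite over A, then every associated prime of the A-ideal hB is minimal over hA. -/
set_option synthInstance.maxHeartbeats 1000000
set_option maxHeartbeats 1000000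

universe u v

open IsLocalRing Pointwise

/-- The integral closure of an ideal `I`: the ideal generated by all `x` satisfying an
equation `x^n + a₁ x^{n-1} + ⋯ + aₙ = 0` with `aᵢ ∈ Iⁱ` (the set of such `x` is already
an ideal, so the span is exactly the integral closure). -/
def Ideal.integralClosureOfIdeal {A : Type u} [CommRing A] (I : Ideal A) : Ideal A :=
  Ideal.span {x : A | ∃ n : ℕ, 0 < n ∧ ∃ a : ℕ → A,
    (∀ i, 1 ≤ i → i ≤ n → a i ∈ I ^ i) ∧
    x ^ n + ∑ i ∈ Finset.Icc 1 n, a i * x ^ (n - i) = 0}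

/-! Let `C` be the completion of `A`. If `P` is associated to the integral closure of `(h)` but is
not minimal over `(h)`, then some `z ∈ P` lies in no minimal prime of `hC`, and `z a` is integral
over `(h)` for some `a` which is not. By faithful flatness it is enough to contradict this in `C`,
and integrality over `hC` can be tested modulo each minimal prime `p` of `C`.

Since `C` is equidimensional, `dim C/p = d + 1 = dim C`. The Matlis dual `K` of `H^{d+1}_𝔪(C/p)` is
a nonzero finite torsion-free `C/p`-module, and `z` is regular on `K/hK` because
`dim C/(p, h, z) < d`. As `za/h` is integral over `C/p`, the submodule
`{κ ∈ K | (za/h)^i κ ∈ K for all i}` is nonzero. It is also finite, and stable under `a/h` since `z`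
is regular on `K/hK`, so the determinant trick shows that `a/h` is integral over `C/p`. -/

section IntegralOverPrincipal

open Polynomial

variable {A : Type*} [CommRing A]

/-- `x` is integral over the principal ideal `(h)`. An equation
`x ^ n + c₁ * h * x ^ (n - 1) + ⋯ + cₙ * h ^ n = 0` is encoded by the monic polynomial
`q = T ^ n + c₁ * T ^ (n - 1) + ⋯ + cₙ`, the left-hand side being the value of
`q.scaleRoots h` at `x`. -/
def IsIntegralOverPrincipal (h x : A) : Prop :=
  ∃ q : A[X], q.Monic ∧ (q.scaleRoots h).eval x = 0

theorem eval_scaleRoots_eq_sum_Icc {q : A[X]} (hq : q.Monic) (h x : A) :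
    (q.scaleRoots h).eval x = x ^ q.natDegree +
      ∑ i ∈ Finset.Icc 1 q.natDegree,
        q.coeff (q.natDegree - i) * h ^ i * x ^ (q.natDegree - i) := by
  rw [eval_eq_sum_range, natDegree_scaleRoots, Finset.sum_range_succ, add_comm]
  congr 1
  · simp [hq.coeff_natDegree]
  · refine Finset.sum_nbij' (q.natDegree - ·) (q.natDegree - ·) ?_ ?_ ?_ ?_ ?_ <;>
      intro i hi <;> simp only [Finset.mem_range, Finset.mem_Icc] at hi ⊢
    · lia
    · lia
    · lia
    · lia
    · rw [Nat.sub_sub_self hi.le, coeff_scaleRoots]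

theorem isIntegralOverPrincipal_of_sum_eq_zero {h x : A} {n : ℕ} {c : ℕ → A}
    (hc : x ^ n + ∑ i ∈ Finset.Icc 1 n, c i * h ^ i * x ^ (n - i) = 0) :
    IsIntegralOverPrincipal h x := by
  cases subsingleton_or_nontrivial A
  · exact ⟨1, monic_one, Subsingleton.elim _ _⟩
  let q : A[X] := X ^ n + ∑ i ∈ Finset.Icc 1 n, C (c i) * X ^ (n - i)
  have hdeg : (∑ i ∈ Finset.Icc 1 n, C (c i) * X ^ (n - i)).degree < (n : WithBot ℕ) := by
    refine mem_degreeLT.1 (Submodule.sum_mem _ fun i hi ↦ mem_degreeLT.2 ?_)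
    refine (degree_C_mul_X_pow_le _ _).trans_lt ?_
    exact_mod_cast Nat.sub_lt_self (Finset.mem_Icc.1 hi).1 (Finset.mem_Icc.1 hi).2
  have hq : q.Monic := monic_X_pow_add hdeg
  have hqn : q.natDegree = n := natDegree_eq_of_degree_eq_some
    ((degree_add_eq_left_of_degree_lt (by rwa [degree_X_pow])).trans (degree_X_pow n))
  have hcoeff : ∀ i ∈ Finset.Icc 1 n, q.coeff (n - i) = c i := by
    intro i hi
    obtain ⟨hi1, hin⟩ := Finset.mem_Icc.1 hi
    have hne : n - i ≠ n := by lia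
    simp only [q, coeff_add, coeff_X_pow, if_neg hne, finsetSum_coeff, coeff_C_mul, zero_add]
    rw [Finset.sum_eq_single_of_mem i hi fun j hj hji ↦ ?_, if_pos rfl, mul_one]
    have := Finset.mem_Icc.1 hj
    rw [if_neg (by lia), mul_zero]
  refine ⟨q, hq, ?_⟩
  rw [eval_scaleRoots_eq_sum_Icc hq, hqn, ← hc]
  exact congrArg _ (Finset.sum_congr rfl fun i hi ↦ by rw [hcoeff i hi])

theorem IsIntegralOverPrincipal.exists_sum_eq_zero [Nontrivial A] {h x : A}
    (hx : IsIntegralOverPrincipal h x) :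
    ∃ n : ℕ, 0 < n ∧ ∃ c : ℕ → A,
      x ^ n + ∑ i ∈ Finset.Icc 1 n, c i * h ^ i * x ^ (n - i) = 0 := by
  obtain ⟨q, hq, hqx⟩ := hx
  refine ⟨q.natDegree, Nat.pos_of_ne_zero fun hdeg ↦ ?_, fun i ↦ q.coeff (q.natDegree - i), ?_⟩
  · rw [hq.natDegree_eq_zero.1 hdeg] at hqx
    simp at hqx
  · rw [← hqx, eval_scaleRoots_eq_sum_Icc hq]

theorem isIntegralOverPrincipal_iff_exists_mem_span_pow [Nontrivial A] {h x : A} :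
    IsIntegralOverPrincipal h x ↔ ∃ n : ℕ, 0 < n ∧ ∃ a : ℕ → A,
      (∀ i, 1 ≤ i → i ≤ n → a i ∈ (Ideal.span {h} : Ideal A) ^ i) ∧
      x ^ n + ∑ i ∈ Finset.Icc 1 n, a i * x ^ (n - i) = 0 := by
  simp only [Ideal.span_singleton_pow, Ideal.mem_span_singleton]
  constructor
  · intro hx
    obtain ⟨n, hn, c, hc⟩ := hx.exists_sum_eq_zero
    exact ⟨n, hn, fun i ↦ c i * h ^ i, fun i _ _ ↦ dvd_mul_left _ _, hc⟩
  · rintro ⟨n, -, a, ha, hax⟩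
    choose! c hc using ha
    refine isIntegralOverPrincipal_of_sum_eq_zero (n := n) (c := c) ?_
    rw [← hax]
    refine congrArg _ (Finset.sum_congr rfl fun i hi ↦ ?_)
    rw [hc i (Finset.mem_Icc.1 hi).1 (Finset.mem_Icc.1 hi).2, mul_comm (c i)]

theorem IsIntegralOverPrincipal.self (h : A) : IsIntegralOverPrincipal h h :=
  isIntegralOverPrincipal_of_sum_eq_zero (n := 1) (c := fun _ ↦ -1) (by simp)

theorem IsIntegralOverPrincipal.map {C : Type*} [CommRing C] (f : A →+* C) {h x : A}
    (hx : IsIntegralOverPrincipal h x) : IsIntegralOverPrincipal (f h) (f x) := by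
  cases subsingleton_or_nontrivial C
  · exact ⟨1, monic_one, Subsingleton.elim _ _⟩
  obtain ⟨q, hq, hqx⟩ := hx
  refine ⟨q.map f, hq.map f, ?_⟩
  rw [← map_scaleRoots _ _ _ (by rw [hq.leadingCoeff, map_one]; exact one_ne_zero), eval_map,
    eval₂_at_apply, hqx, map_zero]

theorem IsIntegralOverPrincipal.exists_pow_dvd {h x : A} (hx : IsIntegralOverPrincipal h x) :
    ∃ n : ℕ, ∀ i : ℕ, h ^ i ∣ h ^ n * x ^ i := by
  obtain ⟨q, hq, hqx⟩ := hx
  rw [eval_scaleRoots_eq_sum_Icc hq] at hqx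
  set n := q.natDegree
  refine ⟨n, fun i ↦ ?_⟩
  induction i using Nat.strong_induction_on with | _ i ih
  obtain hin | hni := le_total i n
  · exact (pow_dvd_pow h hin).mul_right _
  have hxi : h ^ n * x ^ i =
      -∑ j ∈ Finset.Icc 1 n, q.coeff (n - j) * (h ^ j * (h ^ n * x ^ (i - j))) := by
    rw [← Nat.add_sub_of_le hni, pow_add, eq_neg_of_add_eq_zero_left hqx, neg_mul, mul_neg,
      Finset.sum_mul, Finset.mul_sum]
    refine congrArg _ (Finset.sum_congr rfl fun j hj ↦ ?_)
    rw [Nat.sub_add_comm (Finset.mem_Icc.1 hj).2, pow_add]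
    ring
  rw [hxi, dvd_neg]
  refine Finset.dvd_sum fun j hj ↦ ?_
  obtain ⟨hj1, hjn⟩ := Finset.mem_Icc.1 hj
  rw [← Nat.add_sub_of_le (hjn.trans hni), pow_add, Nat.add_sub_of_le (hjn.trans hni)]
  exact (mul_dvd_mul_left _ (ih (i - j) (by lia))).mul_left _

theorem isIntegralOverPrincipal_iff_exists_isIntegral {h : A} {K : Type*} [CommRing K]
    [Algebra A K] [IsFractionRing A K] (hh : h ∈ nonZeroDivisors A) {x : A} :
    IsIntegralOverPrincipal h x ↔
      ∃ b : K, IsIntegral A b ∧ algebraMap A K h * b = algebraMap A K x := by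
  have hinj : Function.Injective (algebraMap A K) := IsFractionRing.injective A K
  constructor
  · rintro ⟨q, hq, hqx⟩
    obtain ⟨b, hb⟩ := (IsLocalization.map_units K (⟨h, hh⟩ : nonZeroDivisors A)).dvd
      (a := algebraMap A K x)
    refine ⟨b, ⟨q, hq, ?_⟩, hb.symm⟩
    have : algebraMap A K h ^ q.natDegree * eval₂ (algebraMap A K) b q = 0 := by
      rw [← scaleRoots_eval₂_mul, ← hb, eval₂_at_apply, hqx, map_zero]
    exact ((IsLocalization.map_units K (⟨h, hh⟩ : nonZeroDivisors A)).pow _).mul_right_eq_zero.1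
      this
  · rintro ⟨b, ⟨q, hq, hqb⟩, hbx⟩
    refine ⟨q, hq, hinj ?_⟩
    rw [map_zero, ← eval₂_at_apply, ← hbx, scaleRoots_eval₂_mul, hqb, mul_zero]

theorem isIntegralOverPrincipal_of_pow_dvd [IsNoetherianRing A] {h : A}
    (hh : h ∈ nonZeroDivisors A) {x : A} {n : ℕ} (hx : ∀ i : ℕ, h ^ i ∣ h ^ n * x ^ i) :
    IsIntegralOverPrincipal h x := by
  let K := FractionRing A
  obtain ⟨b, hb⟩ := (IsLocalization.map_units K (⟨h, hh⟩ : nonZeroDivisors A)).dvd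
    (a := algebraMap A K x)
  refine (isIntegralOverPrincipal_iff_exists_isIntegral (K := K) hh).2 ⟨b, ?_, hb.symm⟩
  refine IsAlmostIntegral.isIntegral_of_nonZeroDivisors_le_comap
    ⟨h ^ n, pow_mem hh n, fun i ↦ ?_⟩ fun s hs ↦
      (IsLocalization.map_units K (⟨s, hs⟩ : nonZeroDivisors A)).mem_nonZeroDivisors
  obtain ⟨y, hy⟩ := hx i
  refine ⟨y, ((IsLocalization.map_units K (⟨h, hh⟩ : nonZeroDivisors A)).pow i).mul_left_cancel ?_⟩
  rw [← map_pow, ← map_mul, ← hy, Algebra.smul_def, map_mul, map_pow _ x, hb]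
  simp only [map_pow]
  ring

theorem IsIntegralOverPrincipal.of_map {C : Type*} [CommRing C] [Algebra A C]
    [Module.FaithfullyFlat A C] [IsNoetherianRing A] {h : A} (hh : h ∈ nonZeroDivisors A) {x : A}
    (hx : IsIntegralOverPrincipal (algebraMap A C h) (algebraMap A C x)) :
    IsIntegralOverPrincipal h x := by
  obtain ⟨n, hn⟩ := hx.exists_pow_dvd
  refine isIntegralOverPrincipal_of_pow_dvd (n := n) hh fun i ↦ ?_
  rw [← Ideal.mem_span_singleton,
    ← Ideal.comap_map_eq_self_of_faithfullyFlat (B := C) (Ideal.span {h ^ i}), Ideal.mem_comap,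
    Ideal.map_span, Set.image_singleton, Ideal.mem_span_singleton]
  simpa only [map_mul, map_pow] using hn i

theorem scaleRoots_mul_of_monic {p q : A[X]} (hp : p.Monic) (hq : q.Monic) (h : A) :
    (p * q).scaleRoots h = p.scaleRoots h * q.scaleRoots h := by
  rw [← mul_scaleRoots, hp.natDegree_mul hq, Nat.sub_self, pow_zero, one_smul]

-- The values `(q.scaleRoots h).eval x`, `q` monic, form a multiplicative set; if it meets every
-- minimal prime, then it meets every prime and hence contains `0`.
theorem isIntegralOverPrincipal_of_forall_minimalPrimes {h x : A}
    (H : ∀ p ∈ minimalPrimes A, ∃ q : A[X], q.Monic ∧ (q.scaleRoots h).eval x ∈ p) :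
    IsIntegralOverPrincipal h x := by
  let S : Submonoid A :=
    { carrier := {y | ∃ q : A[X], q.Monic ∧ (q.scaleRoots h).eval x = y}
      one_mem' := ⟨1, monic_one, by rw [one_scaleRoots, eval_one]⟩
      mul_mem' := by
        rintro _ _ ⟨p, hp, rfl⟩ ⟨q, hq, rfl⟩
        exact ⟨p * q, hp.mul hq, by rw [scaleRoots_mul_of_monic hp hq, eval_mul]⟩ }
  by_contra hx
  have hdisj : Disjoint ((⊥ : Ideal A) : Set A) S :=
    Set.disjoint_singleton_left.2 hx
  obtain ⟨P, hP, -, hPS⟩ := Ideal.exists_le_prime_disjoint ⊥ S hdisj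
  obtain ⟨p, hp, hpP⟩ := Ideal.exists_minimalPrimes_le (bot_le : ⊥ ≤ P)
  obtain ⟨q, hq, hqp⟩ := H p hp
  exact Set.disjoint_left.1 hPS (hpP hqp) ⟨q, hq, rfl⟩

end IntegralOverPrincipal

section AdicCompleteness

theorem exists_mvPowerSeries_ringHom {A S σ : Type*} [CommRing A] [CommRing S] [Algebra A S]
    [Finite σ] (J : Ideal S) [IsAdicComplete J S] {s : σ → S} (hs : ∀ i, s i ∈ J) :
    ∃ F : MvPowerSeries σ A →+* S, ∀ p : MvPolynomial σ A, F p = MvPolynomial.aeval s p := by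
  let φ : MvPolynomial σ A →+* S := (MvPolynomial.aeval s).toRingHom
  have hφ (n : ℕ) : MvPolynomial.idealOfVars σ A ^ n ≤ (J ^ n).comap φ := by
    rw [← Ideal.map_le_iff_le_comap, Ideal.map_pow]
    refine Ideal.pow_right_mono (Ideal.map_le_iff_le_comap.2 (Ideal.span_le.2 ?_)) n
    rintro _ ⟨i, rfl⟩
    simpa [φ] using hs i
  let f (n : ℕ) : MvPowerSeries σ A →+* S ⧸ J ^ n :=
    (Ideal.quotientMap (J ^ n) φ (hφ n)).comp (MvPowerSeries.truncTotalAlgHom σ A n).toRingHom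
  have hf {m n : ℕ} (hmn : m ≤ n) : (Ideal.Quotient.factorPow J hmn).comp (f n) = f m := by
    ext p
    have := hφ m (MvPowerSeries.truncTotal_sub_truncTotal_mem_pow_idealOfVars hmn le_rfl p)
    simpa [f, Ideal.Quotient.mk_eq_mk_iff_sub_mem] using this
  refine ⟨IsAdicComplete.liftRingHom J f hf, fun p ↦ ?_⟩
  have hfp (n : ℕ) : f n p = Ideal.Quotient.mk (J ^ n) (φ p) :=
    congrArg (Ideal.quotientMap (J ^ n) φ (hφ n))
      ((MvPowerSeries.truncTotalAlgHom σ A n).commutes p)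
  refine (IsHausdorff.eq_iff_smodEq (I := J)).2 fun n ↦ ?_
  rw [SModEq.sub_mem, smul_eq_mul, Ideal.mul_top, ← Ideal.Quotient.mk_eq_mk_iff_sub_mem,
    IsAdicComplete.mk_liftRingHom, hfp]
  rfl

theorem isNoetherianRing_of_isAdicComplete_map {A S : Type*} [CommRing A] [IsNoetherianRing A]
    [CommRing S] [Algebra A S] (I : Ideal A) [IsAdicComplete (I.map (algebraMap A S)) S]
    (hI : Function.Surjective
      ((Ideal.Quotient.mk (I.map (algebraMap A S))).comp (algebraMap A S))) :
    IsNoetherianRing S := by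
  obtain ⟨r, a, ha⟩ := Submodule.fg_iff_exists_fin_generating_family.1 I.fg_of_isNoetherianRing
  have haI (i : Fin r) : a i ∈ I := ha ▸ Submodule.subset_span (Set.mem_range_self i)
  obtain ⟨F, hF⟩ := exists_mvPowerSeries_ringHom (A := A) (I.map (algebraMap A S))
    fun i ↦ Ideal.mem_map_of_mem _ (haI i)
  have hFX : F ∘ MvPowerSeries.X = algebraMap A S ∘ a := by
    ext i
    simpa using hF (MvPolynomial.X i)
  have hmap : (Ideal.span (Set.range MvPowerSeries.X)).map F = I.map (algebraMap A S) := by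
    rw [← ha, Ideal.map_span, ← Set.range_comp, hFX, Set.range_comp, ← Ideal.map_span,
      Ideal.submodule_span_eq]
  have : IsHausdorff ((Ideal.span (Set.range MvPowerSeries.X)).map F) S := by
    rw [hmap]
    infer_instance
  refine isNoetherianRing_of_surjective _ _ F (surjective_of_mk_map_comp_surjective
    (I := Ideal.span (Set.range MvPowerSeries.X)) F ?_)
  rw [hmap]
  intro y
  obtain ⟨b, rfl⟩ := hI y
  refine ⟨(MvPolynomial.C b : MvPolynomial (Fin r) A), ?_⟩
  rw [RingHom.comp_apply, RingHom.comp_apply, hF, MvPolynomial.aeval_C]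

theorem isNoetherianRing_adicCompletion {A : Type*} [CommRing A] [IsNoetherianRing A]
    (I : Ideal A) : IsNoetherianRing (AdicCompletion I A) := by
  have hI := I.fg_of_isNoetherianRing
  have := AdicCompletion.isAdicComplete_self I hI
  refine isNoetherianRing_of_isAdicComplete_map I fun y ↦ ?_
  obtain ⟨c, rfl⟩ := Ideal.Quotient.mk_surjective y
  obtain ⟨b, hb⟩ := Ideal.Quotient.mk_surjective (AdicCompletion.evalOneₐ I c)
  refine ⟨b, Ideal.Quotient.eq.2 ?_⟩
  rw [← AdicCompletion.ker_evalOneₐ_eq_map I hI, RingHom.mem_ker]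
  simp [hb]

theorem isPrecomplete_pi {R ι : Type*} [CommRing R] (I : Ideal R) (M : ι → Type*) [Finite ι]
    [∀ i, AddCommGroup (M i)] [∀ i, Module R (M i)] [∀ i, IsPrecomplete I (M i)] :
    IsPrecomplete I (∀ i, M i) := by
  classical
  cases nonempty_fintype ι
  refine AdicCompletion.of_surjective_iff.1 fun x ↦ ?_
  choose a ha using fun i ↦
    AdicCompletion.of_surjective I (M i) (AdicCompletion.piEquivOfFintype I M x i)
  refine ⟨a, (AdicCompletion.piEquivOfFintype I M).injective (funext fun i ↦ ?_)⟩
  rw [← ha]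
  rfl

theorem finite_of_finite_quotient_smul_top {R M : Type*} [CommRing R] [AddCommGroup M]
    [Module R M] (I : Ideal R) [IsPrecomplete I R] [IsHausdorff I M]
    [Module.Finite R (M ⧸ (I • ⊤ : Submodule R M))] : Module.Finite R M := by
  obtain ⟨n, y, hy⟩ := Module.Finite.exists_fin (R := R) (M := M ⧸ (I • ⊤ : Submodule R M))
  choose x hx using fun i ↦ Submodule.mkQ_surjective _ (y i)
  have := isPrecomplete_pi I fun _ : Fin n ↦ R
  refine Module.Finite.of_surjective (Fintype.linearCombination R x)
    (surjective_of_mkQ_comp_surjective (I := I) ?_)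
  have hxy : (I • ⊤ : Submodule R M).mkQ ∘ x = y := funext hx
  rw [← LinearMap.range_eq_top, LinearMap.range_comp, Fintype.range_linearCombination,
    Submodule.map_span, ← Set.range_comp, hxy, hy]

end AdicCompleteness

section InjectiveHull

variable {R J : Type*} [CommRing R] [AddCommGroup J] [Module R J]

theorem exists_maximal_disjoint {N L₀ : Submodule R J} (h : Disjoint N L₀) :
    ∃ L, L₀ ≤ L ∧ Maximal (Disjoint N) L := by
  refine zorn_le_nonempty₀ {L | Disjoint N L} (fun c hc hchain _ _ ↦ ?_) L₀ h
  exact ⟨sSup c, hchain.directedOn.disjoint_sSup_right.2 hc, fun _ ↦ le_sSup⟩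

-- Extend the inclusion of `E` along `E ↪ J ⧸ L` to `φ : J ⧸ L → J`. The maximality of `L` shows
-- that the range of `φ` is disjoint from `L`, so by the maximality of `E` it is contained in `E`.
theorem exists_retraction_of_maximal_disjoint (hJ : Module.Baer R J) {E L : Submodule R J}
    (hE : Maximal (Disjoint L) E) (hL : Maximal (Disjoint E) L) :
    ∃ ρ : J →ₗ[R] E, ρ ∘ₗ E.subtype = LinearMap.id := by
  have hj : Function.Injective (L.mkQ ∘ₗ E.subtype) := by
    rw [← LinearMap.ker_eq_bot, LinearMap.ker_comp, Submodule.ker_mkQ]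
    exact Submodule.disjoint_iff_comap_eq_bot.1 hE.prop.symm
  obtain ⟨φ, hφ⟩ := hJ.extension_property (L.mkQ ∘ₗ E.subtype) hj E.subtype
  have hφE (e : E) : φ (L.mkQ e) = e := LinearMap.congr_fun hφ e
  have hcomap : L.comap (φ ∘ₗ L.mkQ) ≤ L := by
    refine hL.le_of_ge ?_ fun x hx ↦ ?_
    · refine Submodule.disjoint_def.2 fun x hxE hx ↦ ?_
      rw [Submodule.mem_comap, LinearMap.comp_apply, hφE ⟨x, hxE⟩] at hx
      exact Submodule.disjoint_def.1 hE.prop x hx hxE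
    · simp [(Submodule.Quotient.mk_eq_zero L).2 hx]
  have hrange : LinearMap.range φ ≤ E := by
    refine hE.le_of_ge ?_ fun e he ↦ ⟨L.mkQ e, hφE ⟨e, he⟩⟩
    refine Submodule.disjoint_def.2 ?_
    rintro _ hx ⟨y, rfl⟩
    obtain ⟨x, rfl⟩ := L.mkQ_surjective y
    rw [Submodule.mkQ_apply, (Submodule.Quotient.mk_eq_zero L).2 (hcomap hx), map_zero]
  exact ⟨(φ ∘ₗ L.mkQ).codRestrict E fun x ↦ hrange ⟨_, rfl⟩, LinearMap.ext fun e ↦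
    Subtype.ext (hφE e)⟩

theorem baer_of_retraction {E : Type*} [AddCommGroup E] [Module R E] (hJ : Module.Baer R J)
    {ι : E →ₗ[R] J} {ρ : J →ₗ[R] E} (hρ : ρ ∘ₗ ι = LinearMap.id) : Module.Baer R E := by
  intro I g
  obtain ⟨g', hg'⟩ := hJ I (ι ∘ₗ g)
  refine ⟨ρ ∘ₗ g', fun x hx ↦ ?_⟩
  rw [LinearMap.comp_apply, hg' x hx]
  exact LinearMap.congr_fun hρ _

theorem eq_bot_of_disjoint_of_le {N E L K : Submodule R J} (hL : Maximal (Disjoint N) L)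
    (hEL : Disjoint E L) (hNE : N ≤ E) (hKE : K ≤ E) (hKN : Disjoint N K) : K = ⊥ := by
  have hNKL : Disjoint N (K ⊔ L) :=
    hKN.disjoint_sup_right_of_disjoint_sup_left (hEL.mono_left (sup_le hNE hKE))
  have hKL : K ≤ L := le_sup_left.trans (hL.le_of_ge hNKL le_sup_right)
  exact disjoint_self.1 (hEL.mono hKE hKL)

-- If `L` is maximal disjoint from `N` and `E ⊇ N` is maximal disjoint from `L`, then `E` is an
-- injective hull of `N`.
theorem exists_baer_essential (hJ : Module.Baer R J) (N : Submodule R J) :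
    ∃ E : Submodule R J, N ≤ E ∧ Module.Baer R E ∧ ∀ K ≤ E, Disjoint N K → K = ⊥ := by
  obtain ⟨L, -, hL⟩ := exists_maximal_disjoint (disjoint_bot_right (a := N))
  obtain ⟨E, hNE, hE⟩ := exists_maximal_disjoint hL.prop.symm
  have hL' : Maximal (Disjoint E) L :=
    ⟨hE.prop.symm, fun L' hL' hLL' ↦ hL.le_of_ge (hL'.mono_left hNE) hLL'⟩
  obtain ⟨ρ, hρ⟩ := exists_retraction_of_maximal_disjoint hJ hE hL'
  exact ⟨E, hNE, baer_of_retraction hJ hρ,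
    fun K hKE hNK ↦ eq_bot_of_disjoint_of_le hL hL'.prop hNE hKE hNK⟩

end InjectiveHull

theorem exists_injective_baer {R : Type u} [CommRing R] (N : Type u) [AddCommGroup N]
    [Module R N] : ∃ (J : Type u) (_ : AddCommGroup J) (_ : Module R J) (ι : N →ₗ[R] J),
      Function.Injective ι ∧ Module.Baer R J := by
  let J := CategoryTheory.Injective.under (ModuleCat.of R N)
  have : CategoryTheory.Injective (ModuleCat.of R J) := CategoryTheory.Injective.injective_under _
  exact ⟨J, inferInstance, inferInstance, (CategoryTheory.Injective.ι (ModuleCat.of R N)).hom,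
    (ModuleCat.mono_iff_injective _).1 inferInstance,
    Module.Baer.of_injective (Module.injective_module_of_injective_object R J)⟩

theorem exists_baer_finite_hom {R : Type u} [CommRing R] (k : Type u) [AddCommGroup k]
    [Module R k] [IsSimpleModule R k] :
    ∃ (E : Type u) (_ : AddCommGroup E) (_ : Module R E),
      Module.Baer R E ∧ Module.Finite R (k →ₗ[R] E) ∧ Nontrivial (k →ₗ[R] E) := by
  obtain ⟨J, _, _, ι, hι, hJ⟩ := exists_injective_baer (R := R) k
  obtain ⟨E, hιE, hE, hess⟩ := exists_baer_essential hJ (LinearMap.range ι)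
  have hrange (f : k →ₗ[R] E) : LinearMap.range (E.subtype ∘ₗ f) ≤ LinearMap.range ι := by
    obtain h0 | hf := (E.subtype ∘ₗ f).injective_or_eq_zero.symm
    · simp [h0]
    have hatom : IsAtom (LinearMap.range (E.subtype ∘ₗ f)) := isSimpleModule_iff_isAtom.1
      (IsSimpleModule.congr (LinearEquiv.ofInjective _ hf).symm)
    refine hatom.not_disjoint_iff_le.1 fun hdisj ↦ hatom.1 (hess _ ?_ hdisj.symm)
    rintro _ ⟨y, rfl⟩
    exact (f y).2
  have := IsSimpleModule.nontrivial R k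
  obtain ⟨x, hx⟩ := exists_ne (0 : k)
  let ev : (k →ₗ[R] E) →ₗ[R] LinearMap.range ι :=
    (E.subtype ∘ₗ LinearMap.applyₗ x).codRestrict _ fun f ↦ hrange f ⟨x, rfl⟩
  have hev : Function.Injective ev := fun f g hfg ↦ by
    refine LinearMap.ext_on (IsSimpleModule.span_singleton_eq_top R hx) ?_
    rintro _ rfl
    exact Subtype.ext (congrArg (fun y : LinearMap.range ι ↦ (y : J)) hfg)
  refine ⟨E, inferInstance, inferInstance, hE, Module.Finite.of_injective ev hev,
    ι.codRestrict E fun y ↦ hιE ⟨y, rfl⟩, 0, fun h ↦ hx (hι ?_)⟩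
  rw [map_zero]
  exact congrArg Subtype.val (LinearMap.congr_fun h x)

section TorsionEffaceable

open CategoryTheory Abelian

variable {R : Type u} [CommRing R]

theorem shortExact_of_exact {N N' N'' : Type u} [AddCommGroup N] [Module R N] [AddCommGroup N']
    [Module R N'] [AddCommGroup N''] [Module R N''] {f : N →ₗ[R] N'} {g : N' →ₗ[R] N''}
    (hf : Function.Injective f) (hg : Function.Surjective g) (hfg : Function.Exact f g) :
    (ShortComplex.mk (ModuleCat.ofHom f) (ModuleCat.ofHom g)
      (ModuleCat.hom_ext hfg.linearMap_comp_eq_zero)).ShortExact :=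
  ModuleCat.shortComplex_shortExact _ hfg hf hg

theorem exists_extClass_comp_eq {S : ShortComplex (ModuleCat.{u} R)} (hS : S.ShortExact)
    [Projective S.X₂] {N : ModuleCat.{u} R} {i : ℕ} (x : Ext S.X₃ N (i + 1)) :
    ∃ y : Ext S.X₁ N i, hS.extClass.comp y (add_comm 1 i) = x :=
  Ext.contravariant_sequence_exact₃ hS N x (Ext.eq_zero_of_projective _) (add_comm 1 i)

theorem mk₀_comp_extClass_comp_eq_zero {S S' : ShortComplex (ModuleCat.{u} R)}
    (hS : S.ShortExact) (hS' : S'.ShortExact) (φ : S' ⟶ S) {N : ModuleCat.{u} R} {i : ℕ}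
    {y : Ext S.X₁ N i} (hy : (Ext.mk₀ φ.τ₁).comp y (zero_add i) = 0) :
    (Ext.mk₀ φ.τ₃).comp (hS.extClass.comp y (add_comm 1 i)) (zero_add (i + 1)) = 0 := by
  rw [← Ext.comp_assoc (h₁₂ := zero_add 1) (h := by omega),
    ← ShortComplex.ShortExact.extClass_naturality hS' hS φ,
    Ext.comp_assoc (h₂₃ := zero_add i) (h := by omega), hy, Ext.comp_zero]

theorem exists_forall_comp_ext_eq_zero (I : Ideal R) {F M : Type u} [AddCommGroup F] [Module R F]
    [Module.Projective R F] [AddCommGroup M] [Module R M] {q : F →ₗ[R] M}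
    (hq : Function.Surjective q) {N : ModuleCat.{u} R} {i : ℕ}
    (hker : ∀ y : Ext (ModuleCat.of R (LinearMap.ker q)) N i, ∃ t,
      (Ext.mk₀ (ModuleCat.ofHom (I ^ t • ⊤ : Submodule R (LinearMap.ker q)).subtype)).comp y
        (zero_add i) = 0)
    (x : Ext (ModuleCat.of R M) N (i + 1)) :
    ∃ t, ∀ {F' M' : Type u} [AddCommGroup F'] [Module R F'] [AddCommGroup M'] [Module R M']
      {q' : F' →ₗ[R] M'} (a : F' →ₗ[R] F) (b : M' →ₗ[R] M), Function.Surjective q' →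
      b ∘ₗ q' = q ∘ₗ a → (LinearMap.ker q').map a ≤ I ^ t • LinearMap.ker q →
      (Ext.mk₀ (ModuleCat.ofHom b)).comp x (zero_add (i + 1)) = 0 := by
  have hS := shortExact_of_exact Subtype.val_injective hq (LinearMap.exact_subtype_ker_map q)
  have : Projective (ModuleCat.of R F) := (IsProjective.iff_projective F).1 inferInstance
  obtain ⟨y, rfl⟩ := exists_extClass_comp_eq hS x
  obtain ⟨t, ht⟩ := hker y
  refine ⟨t, fun {F' M'} _ _ _ _ {q'} a b hq' hcomm hmap ↦ ?_⟩
  have hS' := shortExact_of_exact Subtype.val_injective hq' (LinearMap.exact_subtype_ker_map q')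
  have ha (z : LinearMap.ker q') : a z ∈ I ^ t • LinearMap.ker q := hmap ⟨z, z.2, rfl⟩
  have hle (z : LinearMap.ker q') :
      (⟨a z, Submodule.smul_le_right (ha z)⟩ : LinearMap.ker q) ∈
        (I ^ t • ⊤ : Submodule R (LinearMap.ker q)) := by
    rw [Submodule.mem_smul_top_iff]
    exact ha z
  let α : LinearMap.ker q' →ₗ[R] (I ^ t • ⊤ : Submodule R (LinearMap.ker q)) :=
    ((a ∘ₗ (LinearMap.ker q').subtype).codRestrict _
      fun z ↦ Submodule.smul_le_right (ha z)).codRestrict _ hle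
  refine mk₀_comp_extClass_comp_eq_zero hS hS' ⟨ModuleCat.ofHom α ≫ ModuleCat.ofHom
    (Submodule.subtype _), ModuleCat.ofHom a, ModuleCat.ofHom b, rfl, ?_⟩ ?_
  · exact ModuleCat.hom_ext hcomm.symm
  · rw [← Ext.mk₀_comp_mk₀_assoc, ht, Ext.comp_zero]

theorem exists_restrict_ext_eq_zero [IsNoetherianRing R] (I : Ideal R) {N : ModuleCat.{u} R}
    {n : ℕ} (hN : ∀ r ∈ I ^ n, ∀ y : N, r • y = 0) (i : ℕ) :
    ∀ (M : Type u) [AddCommGroup M] [Module R M] [Module.Finite R M]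
      (x : Ext (ModuleCat.of R M) N i), ∃ t,
      (Ext.mk₀ (ModuleCat.ofHom (I ^ t • ⊤ : Submodule R M).subtype)).comp x (zero_add i) = 0 := by
  induction i with
  | zero =>
    intro M _ _ _ x
    obtain ⟨φ, rfl⟩ := (Ext.mk₀_bijective _ _).2 x
    refine ⟨n, ?_⟩
    rw [Ext.mk₀_comp_mk₀, Ext.mk₀_eq_zero_iff]
    ext ⟨y, hy⟩
    have hle : (I ^ n • ⊤ : Submodule R M) ≤ LinearMap.ker φ.hom :=
      Submodule.smul_le.2 fun r hr y _ ↦ (map_smul φ.hom r y).trans (hN r hr _)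
    exact hle hy
  | succ i ih =>
    intro M _ _ _ x
    obtain ⟨m, q, hq⟩ := Module.Finite.exists_fin' R M
    obtain ⟨t, ht⟩ := exists_forall_comp_ext_eq_zero I hq (ih _) x
    obtain ⟨c, hc⟩ := Ideal.exists_pow_inf_eq_pow_smul I (LinearMap.ker q)
    have hmap : (I ^ (t + c) • ⊤ : Submodule R (Fin m → R)).map q = I ^ (t + c) • ⊤ := by
      rw [Submodule.map_smul'', Submodule.map_top, LinearMap.range_eq_top.2 hq]
    have hq' (y) (hy : y ∈ (I ^ (t + c) • ⊤ : Submodule R (Fin m → R))) :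
        q y ∈ (I ^ (t + c) • ⊤ : Submodule R M) :=
      hmap.le (Submodule.mem_map_of_mem hy)
    refine ⟨t + c, ht (q' := q.restrict hq') (Submodule.subtype _) _ ?_ rfl ?_⟩
    · rintro ⟨z, hz⟩
      obtain ⟨y, hy, rfl⟩ := hmap.ge hz
      exact ⟨⟨y, hy⟩, rfl⟩
    · rintro _ ⟨y, hy, rfl⟩
      have hmem : (y : Fin m → R) ∈ I ^ (t + c) • ⊤ ⊓ LinearMap.ker q :=
        ⟨y.2, congrArg Subtype.val hy⟩
      rw [hc _ (Nat.le_add_left c t), Nat.add_sub_cancel] at hmem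
      exact Submodule.smul_mono le_rfl inf_le_right hmem

theorem exists_factor_comp_ext_eq_zero [IsNoetherianRing R] (I : Ideal R) {N : ModuleCat.{u} R}
    {n : ℕ} (hN : ∀ r ∈ I ^ n, ∀ y : N, r • y = 0) {i a : ℕ}
    (x : Ext (ModuleCat.of R (R ⧸ I ^ a)) N (i + 1)) :
    ∃ b, ∃ hab : a ≤ b, (Ext.mk₀ (ModuleCat.ofHom
      (Submodule.factor (Ideal.pow_le_pow_right hab)))).comp x (zero_add (i + 1)) = 0 := by
  obtain ⟨t, ht⟩ := exists_forall_comp_ext_eq_zero I (Submodule.mkQ_surjective (I ^ a))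
    (exists_restrict_ext_eq_zero I hN i _) x
  refine ⟨t + a, Nat.le_add_left a t, ht (q' := (I ^ (t + a)).mkQ) LinearMap.id _
    (Submodule.mkQ_surjective _) rfl ?_⟩
  rw [Submodule.map_id, Submodule.ker_mkQ, Submodule.ker_mkQ, smul_eq_mul, pow_add]

end TorsionEffaceable

section LocalCohomology

open CategoryTheory Abelian

variable {R : Type u} [CommRing R]

namespace LocalCohomology

/-- The transition map `R ⧸ I ^ b → R ⧸ I ^ a` for `a ≤ b`. -/
def transition (I : Ideal R) {a b : ℕ} (hab : a ≤ b) :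
    ModuleCat.of R (R ⧸ I ^ b) ⟶ ModuleCat.of R (R ⧸ I ^ a) :=
  ModuleCat.ofHom (Submodule.factor (Ideal.pow_le_pow_right hab))

/-- The map `Extⁱ(R ⧸ I ^ a, N) → Extⁱ(R ⧸ I ^ b, N)` induced by `transition`. -/
noncomputable def extTransition (I : Ideal R) (i : ℕ) (N : ModuleCat.{u} R) (a b : ℕ)
    (hab : a ≤ b) :
    Ext (ModuleCat.of R (R ⧸ I ^ a)) N i →ₗ[R] Ext (ModuleCat.of R (R ⧸ I ^ b)) N i :=
  Ext.bilinearCompOfLinear R _ _ N 0 i i (zero_add i) (Ext.mk₀ (transition I hab))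

theorem extTransition_apply (I : Ideal R) {i : ℕ} {N : ModuleCat.{u} R} {a b : ℕ} (hab : a ≤ b)
    (x : Ext (ModuleCat.of R (R ⧸ I ^ a)) N i) :
    extTransition I i N a b hab x = (Ext.mk₀ (transition I hab)).comp x (zero_add i) :=
  rfl

end LocalCohomology

/-- The `i`-th local cohomology module `colimₙ Extⁱ(R ⧸ Iⁿ, N)` of `N` with support in `I`. It is
built from Yoneda-type `Ext` groups, rather than from the derived functors behind
`localCohomology`, in order to have the long exact sequence available. -/
def LocalCohomology (I : Ideal R) (i : ℕ) (N : Type u) [AddCommGroup N] [Module R N] : Type u :=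
  Module.DirectLimit (fun n ↦ Ext (ModuleCat.of R (R ⧸ I ^ n)) (ModuleCat.of R N) i)
    (LocalCohomology.extTransition I i (ModuleCat.of R N))

namespace LocalCohomology

noncomputable section

variable {I : Ideal R} {N N' N'' : Type u} [AddCommGroup N] [Module R N] [AddCommGroup N']
  [Module R N'] [AddCommGroup N''] [Module R N'']

instance (i : ℕ) : AddCommGroup (LocalCohomology I i N) :=
  inferInstanceAs (AddCommGroup (Module.DirectLimit _ _))

instance (i : ℕ) : Module R (LocalCohomology I i N) :=
  inferInstanceAs (Module R (Module.DirectLimit _ _))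

instance (i : ℕ) : DirectedSystem
    (fun n ↦ Ext (ModuleCat.of R (R ⧸ I ^ n)) (ModuleCat.of R N) i)
    (fun a b hab ↦ extTransition I i (ModuleCat.of R N) a b hab) where
  map_self a x := by
    have h : transition I (le_refl a) = 𝟙 _ :=
      ModuleCat.hom_ext (Submodule.linearMap_qext _ rfl)
    rw [extTransition_apply, h, Ext.mk₀_id_comp]
  map_map c b a hab hbc x := by
    have h : transition I hbc ≫ transition I hab = transition I (hab.trans hbc) :=
      ModuleCat.hom_ext (Submodule.linearMap_qext _ rfl)
    rw [extTransition_apply, extTransition_apply, extTransition_apply, Ext.mk₀_comp_mk₀_assoc, h]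

/-- The structure map `Extⁱ(R ⧸ Iⁿ, N) → Hⁱ_I(N)` of the colimit. -/
def of {i : ℕ} (n : ℕ) :
    Ext (ModuleCat.of R (R ⧸ I ^ n)) (ModuleCat.of R N) i →ₗ[R] LocalCohomology I i N :=
  Module.DirectLimit.of R ℕ _ (extTransition I i (ModuleCat.of R N)) n

theorem exists_of {i : ℕ} (z : LocalCohomology I i N) : ∃ n x, of n x = z :=
  Module.DirectLimit.exists_of z

theorem of_extTransition {i a b : ℕ} (hab : a ≤ b)
    (x : Ext (ModuleCat.of R (R ⧸ I ^ a)) (ModuleCat.of R N) i) :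
    of b (extTransition I i _ a b hab x) = of a x :=
  Module.DirectLimit.of_f

theorem exists_extTransition_eq_zero {i a : ℕ}
    {x : Ext (ModuleCat.of R (R ⧸ I ^ a)) (ModuleCat.of R N) i} (hx : of a x = 0) :
    ∃ b, ∃ hab : a ≤ b, extTransition I i _ a b hab x = 0 :=
  Module.DirectLimit.of.zero_exact hx

theorem exists_forall_mem_pow_smul_eq_zero {i : ℕ} (z : LocalCohomology I i N) :
    ∃ n, ∀ r ∈ I ^ n, r • z = 0 := by
  obtain ⟨n, x, rfl⟩ := exists_of z
  refine ⟨n, fun r hr ↦ ?_⟩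
  have hr : r • 𝟙 (ModuleCat.of R (R ⧸ I ^ n)) = 0 := by
    refine ModuleCat.hom_ext (Submodule.linearMap_qext _ (LinearMap.ext fun y ↦ ?_))
    exact Ideal.Quotient.eq_zero_iff_mem.2 (Ideal.mul_mem_right _ _ hr)
  rw [← map_smul, ← Ext.mk₀_id_comp x, ← Ext.smul_comp, ← Ext.mk₀_smul, hr, Ext.mk₀_zero,
    Ext.zero_comp, map_zero]

theorem subsingleton_succ_of_torsion [IsNoetherianRing R] {n : ℕ}
    (hN : ∀ r ∈ I ^ n, ∀ y : N, r • y = 0) (i : ℕ) :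
    Subsingleton (LocalCohomology I (i + 1) N) := by
  refine subsingleton_of_forall_eq 0 fun z ↦ ?_
  obtain ⟨a, x, rfl⟩ := exists_of z
  obtain ⟨b, hab, hx⟩ := exists_factor_comp_ext_eq_zero I (N := ModuleCat.of R N) hN x
  rw [← of_extTransition hab, extTransition_apply]
  exact (congrArg (of b) hx).trans (map_zero _)

/-- The map `Ext⁰(R ⧸ Iⁿ, N) = Hom(R ⧸ Iⁿ, N) → N` sending `φ` to `φ 1`. -/
def evalOne (I : Ideal R) (N : Type u) [AddCommGroup N] [Module R N] (n : ℕ) :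
    Ext (ModuleCat.of R (R ⧸ I ^ n)) (ModuleCat.of R N) 0 →ₗ[R] N :=
  LinearMap.applyₗ (1 : R ⧸ I ^ n) ∘ₗ (ModuleCat.homLinearEquiv (S := R)).toLinearMap ∘ₗ
    (Ext.linearEquiv₀ (R := R)).toLinearMap

theorem evalOne_mk₀ {n : ℕ} (φ : ModuleCat.of R (R ⧸ I ^ n) ⟶ ModuleCat.of R N) :
    evalOne I N n (Ext.mk₀ φ) = φ.hom (1 : R ⧸ I ^ n) :=
  congrArg (fun ψ : ModuleCat.of R (R ⧸ I ^ n) ⟶ ModuleCat.of R N ↦ ψ.hom (1 : R ⧸ I ^ n))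
    ((Ext.linearEquiv₀ (R := R)).apply_symm_apply φ)

theorem evalOne_extTransition {a b : ℕ} (hab : a ≤ b)
    (x : Ext (ModuleCat.of R (R ⧸ I ^ a)) (ModuleCat.of R N) 0) :
    evalOne I N b (extTransition I 0 _ a b hab x) = evalOne I N a x := by
  obtain ⟨φ, rfl⟩ := (Ext.mk₀_bijective _ _).2 x
  rw [extTransition_apply, Ext.mk₀_comp_mk₀, evalOne_mk₀, evalOne_mk₀]
  rfl

theorem evalOne_injective (n : ℕ) : Function.Injective (evalOne I N n) := by
  refine (injective_iff_map_eq_zero _).2 fun x hx ↦ ?_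
  obtain ⟨φ, rfl⟩ := (Ext.mk₀_bijective _ _).2 x
  rw [evalOne_mk₀] at hx
  rw [Ext.mk₀_eq_zero_iff]
  refine ModuleCat.hom_ext (Submodule.linearMap_qext _ (LinearMap.ext_ring hx))

/-- The map `H⁰_I(N) → N` induced by the maps `evalOne`. -/
def eval (I : Ideal R) (N : Type u) [AddCommGroup N] [Module R N] : LocalCohomology I 0 N →ₗ[R] N :=
  Module.DirectLimit.lift R ℕ _ _ (evalOne I N) fun _ _ hab x ↦ evalOne_extTransition hab x

theorem eval_of {n : ℕ} (x : Ext (ModuleCat.of R (R ⧸ I ^ n)) (ModuleCat.of R N) 0) :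
    eval I N (of n x) = evalOne I N n x :=
  Module.DirectLimit.lift_of _ _ _

theorem eval_injective : Function.Injective (eval I N) :=
  Module.DirectLimit.lift_injective _ _ evalOne_injective

theorem eval_surjective {n : ℕ} (hN : ∀ r ∈ I ^ n, ∀ y : N, r • y = 0) :
    Function.Surjective (eval I N) := by
  intro y
  let φ : (R ⧸ I ^ n) →ₗ[R] N :=
    Submodule.liftQ (I ^ n) (LinearMap.toSpanSingleton R N y) fun r hr ↦ hN r hr y
  refine ⟨of n (Ext.mk₀ (ModuleCat.ofHom φ)), ?_⟩
  rw [eval_of, evalOne_mk₀]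
  exact one_smul R y

/-- The map on local cohomology given by composition with an extension class of degree `a`. -/
def extComp {i j a : ℕ} (e : Ext (ModuleCat.of R N) (ModuleCat.of R N') a) (h : i + a = j) :
    LocalCohomology I i N →ₗ[R] LocalCohomology I j N' :=
  Module.DirectLimit.map (fun _ ↦ (Ext.bilinearCompOfLinear R _ _ _ i a j h).flip e)
    fun a b hab ↦ by
      ext x
      exact Ext.comp_assoc _ _ _ (zero_add i) h (by omega)

theorem extComp_of {i j a : ℕ} (e : Ext (ModuleCat.of R N) (ModuleCat.of R N') a) (h : i + a = j)
    (n : ℕ) (x : Ext (ModuleCat.of R (R ⧸ I ^ n)) (ModuleCat.of R N) i) :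
    extComp e h (of n x) = of n (x.comp e h) :=
  Module.DirectLimit.map_apply_of _ _ _

theorem exact_extComp {i j k a b c : ℕ} {e : Ext (ModuleCat.of R N) (ModuleCat.of R N') a}
    {e' : Ext (ModuleCat.of R N') (ModuleCat.of R N'') b} (h : i + a = j) (h' : j + b = k)
    (hc : a + b = c) (hzero : e.comp e' hc = 0)
    (hexact : ∀ (X : ModuleCat.{u} R) (x : Ext X (ModuleCat.of R N') j), x.comp e' h' = 0 →
      ∃ y : Ext X (ModuleCat.of R N) i, y.comp e h = x) :
    Function.Exact (extComp (I := I) e h) (extComp e' h') := by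
  refine fun z ↦ ⟨fun hz ↦ ?_, ?_⟩
  · obtain ⟨n, x, rfl⟩ := exists_of z
    rw [extComp_of] at hz
    obtain ⟨b, hb, hx⟩ := exists_extTransition_eq_zero hz
    rw [extTransition_apply, ← Ext.comp_assoc (h₁₂ := zero_add j) (h := by omega)] at hx
    obtain ⟨y, hy⟩ := hexact _ _ hx
    refine ⟨of b y, ?_⟩
    rw [extComp_of, hy, ← extTransition_apply, of_extTransition]
  · rintro ⟨w, rfl⟩
    obtain ⟨n, x, rfl⟩ := exists_of w
    rw [extComp_of, extComp_of, Ext.comp_assoc (h₂₃ := hc) (h := by omega), hzero, Ext.comp_zero,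
      map_zero]

/-- The map on `Hⁱ_I` induced by a linear map. -/
def map (I : Ideal R) (i : ℕ) (f : N →ₗ[R] N') :
    LocalCohomology I i N →ₗ[R] LocalCohomology I i N' :=
  extComp (Ext.mk₀ (ModuleCat.ofHom f)) (add_zero i)

theorem map_of {i : ℕ} (f : N →ₗ[R] N') {n : ℕ}
    (x : Ext (ModuleCat.of R (R ⧸ I ^ n)) (ModuleCat.of R N) i) :
    map I i f (of n x) = of n (x.comp (Ext.mk₀ (ModuleCat.ofHom f)) (add_zero i)) :=
  extComp_of _ _ _ _

theorem map_lsmul (i : ℕ) (r : R) :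
    map I i (LinearMap.lsmul R N r) = LinearMap.lsmul R (LocalCohomology I i N) r := by
  ext z
  obtain ⟨n, x, rfl⟩ := exists_of z
  rw [map_of, LinearMap.lsmul_apply, ← map_smul, Ext.smul_eq_comp_mk₀]
  rfl

theorem map_id (i : ℕ) : map I i (LinearMap.id : N →ₗ[R] N) = LinearMap.id := by
  ext z
  obtain ⟨n, x, rfl⟩ := exists_of z
  rw [map_of]
  exact congrArg (of n) (Ext.comp_mk₀_id x)

theorem map_comp (i : ℕ) (f : N →ₗ[R] N') (g : N' →ₗ[R] N'') :
    map I i (g ∘ₗ f) = map I i g ∘ₗ map I i f := by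
  ext z
  obtain ⟨n, x, rfl⟩ := exists_of z
  rw [LinearMap.comp_apply, map_of, map_of, map_of, Ext.comp_assoc_of_second_deg_zero,
    Ext.mk₀_comp_mk₀]
  rfl

theorem exact_map (i : ℕ) {f : N →ₗ[R] N'} {g : N' →ₗ[R] N''} (hf : Function.Injective f)
    (hg : Function.Surjective g) (hfg : Function.Exact f g) :
    Function.Exact (map I i f) (map I i g) := by
  have hS := shortExact_of_exact hf hg hfg
  refine exact_extComp _ _ (zero_add 0) ?_ fun X x hx ↦ Ext.covariant_sequence_exact₂ X hS x hx
  rw [Ext.mk₀_comp_mk₀, Ext.mk₀_eq_zero_iff]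
  exact ModuleCat.hom_ext hfg.linearMap_comp_eq_zero

theorem exists_connecting_exact (i : ℕ) {f : N →ₗ[R] N'} {g : N' →ₗ[R] N''}
    (hf : Function.Injective f) (hg : Function.Surjective g) (hfg : Function.Exact f g) :
    ∃ δ : LocalCohomology I i N'' →ₗ[R] LocalCohomology I (i + 1) N,
      Function.Exact (map I i g) δ ∧ Function.Exact δ (map I (i + 1) f) := by
  have hS := shortExact_of_exact hf hg hfg
  exact ⟨extComp hS.extClass rfl,
    exact_extComp _ _ (zero_add 1) hS.comp_extClass
      fun X x hx ↦ Ext.covariant_sequence_exact₃ X hS x rfl hx,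
    exact_extComp _ _ (add_zero 1) hS.extClass_comp
      fun X x hx ↦ Ext.covariant_sequence_exact₁ X hS x hx rfl⟩

theorem eval_map (f : N →ₗ[R] N') (z : LocalCohomology I 0 N) :
    eval I N' (map I 0 f z) = f (eval I N z) := by
  obtain ⟨n, x, rfl⟩ := exists_of z
  obtain ⟨φ, rfl⟩ := (Ext.mk₀_bijective _ _).2 x
  rw [map_of, eval_of, eval_of, Ext.mk₀_comp_mk₀, evalOne_mk₀, evalOne_mk₀]
  rfl

theorem map_zero_injective {f : N →ₗ[R] N'} (hf : Function.Injective f) :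
    Function.Injective (map I 0 f) := fun z w hzw ↦ by
  refine eval_injective (hf ?_)
  rw [← eval_map, ← eval_map, hzw]

end

end LocalCohomology

end LocalCohomology

section CohomologicalDimension

theorem subsingleton_of_exact {R M N P : Type*} [Ring R] [AddCommGroup M] [Module R M]
    [AddCommGroup N] [Module R N] [AddCommGroup P] [Module R P] [Subsingleton M] [Subsingleton P]
    {f : M →ₗ[R] N} {g : N →ₗ[R] P} (hfg : Function.Exact f g) : Subsingleton N := by
  refine subsingleton_of_forall_eq 0 fun x ↦ ?_
  obtain ⟨y, rfl⟩ := (hfg x).1 (Subsingleton.elim _ _)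
  rw [Subsingleton.elim y 0, map_zero]

theorem injective_of_exact {R M N P : Type*} [Ring R] [AddCommGroup M] [Module R M]
    [AddCommGroup N] [Module R N] [AddCommGroup P] [Module R P] [Subsingleton M]
    {f : M →ₗ[R] N} {g : N →ₗ[R] P} (hfg : Function.Exact f g) : Function.Injective g := by
  refine (injective_iff_map_eq_zero g).2 fun x hx ↦ ?_
  obtain ⟨y, rfl⟩ := (hfg x).1 hx
  rw [Subsingleton.elim y 0, map_zero]

theorem surjective_of_exact {R M N P : Type*} [Ring R] [AddCommGroup M] [Module R M]
    [AddCommGroup N] [Module R N] [AddCommGroup P] [Module R P] [Subsingleton P]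
    {f : M →ₗ[R] N} {g : N →ₗ[R] P} (hfg : Function.Exact f g) : Function.Surjective f :=
  fun x ↦ (hfg x).1 (Subsingleton.elim _ _)

theorem smul_quotient_eq_zero {R : Type*} [CommRing R] {p : Ideal R} {r : R} (hr : r ∈ p)
    (y : R ⧸ p) : r • y = 0 :=
  Module.mem_annihilator.1 (p.annihilator_quotient.symm ▸ hr) y

theorem isSMulRegular_of_linearEquiv_quotient {R M : Type*} [CommRing R] [AddCommGroup M]
    [Module R M] {p : Ideal R} [hp : p.IsPrime] (e : M ≃ₗ[R] R ⧸ p) {u : R} (hu : u ∉ p) :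
    IsSMulRegular M u :=
  (e.isSMulRegular_congr u).2 <| (isSMulRegular_quotient_iff_mem_of_smul_mem p u).2
    fun _ hx ↦ (hp.mem_or_mem hx).resolve_left hu

theorem exists_mem_maximalIdeal_notMem {R : Type*} [CommRing R] [IsLocalRing R] {p : Ideal R}
    [hp : p.IsPrime] (hpm : p ≠ maximalIdeal R) : ∃ u ∈ maximalIdeal R, u ∉ p :=
  Set.not_subset.1 fun h ↦ hpm (le_antisymm (le_maximalIdeal hp.ne_top) h)

namespace LocalCohomology

variable {R : Type u} [CommRing R] {N N' : Type u} [AddCommGroup N] [Module R N]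
  [AddCommGroup N'] [Module R N']

theorem smul_eq_zero (I : Ideal R) (i : ℕ) {r : R} (hr : ∀ y : N, r • y = 0)
    (z : LocalCohomology I i N) : r • z = 0 := by
  have h : LinearMap.lsmul R N r = LinearMap.lsmul R N 0 :=
    LinearMap.ext fun y ↦ (hr y).trans (zero_smul R y).symm
  rw [← LinearMap.lsmul_apply, ← map_lsmul, h, map_lsmul, LinearMap.lsmul_apply, zero_smul]

instance (I : Ideal R) (i : ℕ) [Subsingleton N] : Subsingleton (LocalCohomology I i N) :=
  subsingleton_of_forall_eq 0 fun z ↦ by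
    rw [← one_smul R z, smul_eq_zero I i (fun y ↦ Subsingleton.elim _ _)]

/-- The isomorphism on `Hⁱ_I` induced by a linear isomorphism. -/
noncomputable def congr (I : Ideal R) (i : ℕ) (e : N ≃ₗ[R] N') :
    LocalCohomology I i N ≃ₗ[R] LocalCohomology I i N' :=
  LinearEquiv.ofLinearMap (map I i e) (map I i e.symm)
    (by rw [← map_comp, LinearEquiv.comp_coe, e.symm_trans_self, LinearEquiv.refl_toLinearMap,
      map_id])
    (by rw [← map_comp, LinearEquiv.comp_coe, e.self_trans_symm, LinearEquiv.refl_toLinearMap,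
      map_id])

theorem subsingleton_of_smul_injective {I : Ideal R} {i : ℕ} {u : R} (hu : u ∈ I)
    (hinj : IsSMulRegular (LocalCohomology I i N) u) : Subsingleton (LocalCohomology I i N) := by
  refine subsingleton_of_forall_eq 0 fun z ↦ ?_
  obtain ⟨n, hn⟩ := exists_forall_mem_pow_smul_eq_zero z
  exact (hinj.pow n).right_eq_zero_of_smul (hn _ (Ideal.pow_mem_pow hu n))

theorem isSMulRegular_zero (I : Ideal R) {u : R} (hu : IsSMulRegular N u) :
    IsSMulRegular (LocalCohomology I 0 N) u := by
  have h := map_zero_injective (I := I) (f := LinearMap.lsmul R N u) hu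
  rwa [map_lsmul] at h

theorem exists_connecting_exact_lsmul (I : Ideal R) (i : ℕ) {u : R} (hu : IsSMulRegular N u) :
    ∃ δ : LocalCohomology I i (QuotSMulTop u N) →ₗ[R] LocalCohomology I (i + 1) N,
      Function.Exact (map I i (u • (⊤ : Submodule R N)).mkQ) δ ∧
        Function.Exact δ (LinearMap.lsmul R (LocalCohomology I (i + 1) N) u) := by
  rw [← map_lsmul]
  exact exists_connecting_exact i hu (Submodule.mkQ_surjective _)
    (LinearMap.exact_lsmul_mkQ_smul_top N u)

variable [IsNoetherianRing R] [IsLocalRing R] [Module.Finite R N]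

theorem supportDim_quotSMulTop_lt {u : R} (hreg : IsSMulRegular N u) (hu : u ∈ maximalIdeal R)
    {i : ℕ} (h : Module.supportDim R N < (i + 1 : ℕ)) :
    Module.supportDim R (QuotSMulTop u N) < i := by
  rw [← Module.supportDim_quotSMulTop_succ_eq_supportDim hreg hu, Nat.cast_add, Nat.cast_one,
    ENat.WithBot.lt_add_one_iff] at h
  exact ENat.WithBot.add_one_le_natCast_iff.1 h

theorem subsingleton_of_linearEquiv_quotient {i : ℕ} {p : Ideal R} [hp : p.IsPrime]
    (e : N ≃ₗ[R] R ⧸ p) (hdim : Module.supportDim R N < (i + 1 : ℕ))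
    (ih : ∀ (M : Type u) [AddCommGroup M] [Module R M] [Module.Finite R M],
      Module.supportDim R M < i → Subsingleton (LocalCohomology (maximalIdeal R) i M)) :
    Subsingleton (LocalCohomology (maximalIdeal R) (i + 1) N) := by
  by_cases hpm : p = maximalIdeal R
  · refine subsingleton_succ_of_torsion (n := 1) (fun r hr y ↦ e.injective ?_) i
    rw [pow_one, ← hpm] at hr
    rw [map_smul, map_zero, smul_quotient_eq_zero hr]
  · obtain ⟨u, hu, hup⟩ := exists_mem_maximalIdeal_notMem hpm
    have hreg := isSMulRegular_of_linearEquiv_quotient e hup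
    obtain ⟨δ, -, hδ⟩ := exists_connecting_exact_lsmul (maximalIdeal R) i hreg
    have := ih (QuotSMulTop u N) (supportDim_quotSMulTop_lt hreg hu hdim)
    exact subsingleton_of_smul_injective hu (injective_of_exact hδ)

/-- Grothendieck vanishing. -/
theorem subsingleton_of_supportDim_lt {i : ℕ} (hdim : Module.supportDim R N < i) :
    Subsingleton (LocalCohomology (maximalIdeal R) i N) := by
  induction i generalizing N with
  | zero =>
    have : Subsingleton N := by
      by_contra hN
      rw [not_subsingleton_iff_nontrivial] at hN
      have : Nonempty (Module.support R N) := Module.nonempty_support_of_nontrivial.to_subtype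
      exact hdim.not_ge Order.krullDim_nonneg
    infer_instance
  | succ i ih =>
    refine IsNoetherianRing.induction_on_isQuotientEquivQuotientPrime R ‹Module.Finite R N›
      (motive := fun N _ _ _ ↦ Module.supportDim R N < (i + 1 : ℕ) →
        Subsingleton (LocalCohomology (maximalIdeal R) (i + 1) N)) ?_ ?_ ?_ hdim
    · intros
      infer_instance
    · intro N _ _ _ p e hdim
      exact subsingleton_of_linearEquiv_quotient e hdim fun M _ _ _ ↦ ih
    · intro N₁ _ _ _ N₂ _ _ _ N₃ _ _ _ f g hf hg hfg ih₁ ih₃ hdim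
      have := ih₁ ((Module.supportDim_le_of_injective f hf).trans_lt hdim)
      have := ih₃ ((Module.supportDim_le_of_surjective g hg).trans_lt hdim)
      exact subsingleton_of_exact (exact_map (i + 1) hf hg hfg)

theorem map_surjective_of_supportDim_lt {i : ℕ} {g : N →ₗ[R] N'} (hg : Function.Surjective g)
    (hdim : Module.supportDim R N < (i + 1 : ℕ)) :
    Function.Surjective (map (maximalIdeal R) i g) := by
  obtain ⟨δ, hδ, -⟩ := exists_connecting_exact (I := maximalIdeal R) i
    (LinearMap.ker g).injective_subtype hg (LinearMap.exact_subtype_ker_map g)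
  have := subsingleton_of_supportDim_lt
    ((Module.supportDim_le_of_injective _ (LinearMap.ker g).injective_subtype).trans_lt hdim)
  exact surjective_of_exact hδ

theorem smul_surjective_of_supportDim_lt {i : ℕ} {v : R}
    (hdim : Module.supportDim R N < (i + 1 : ℕ))
    (hdim' : Module.supportDim R (QuotSMulTop v N) < i) (z : LocalCohomology (maximalIdeal R) i N) :
    ∃ w, v • w = z := by
  let f := LinearMap.lsmul R N v
  have hrange : Function.Exact (LinearMap.range f).subtype (v • (⊤ : Submodule R N)).mkQ :=
    LinearMap.exact_iff.2 <| (LinearMap.exact_lsmul_mkQ_smul_top N v).linearMap_ker_eq.trans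
      (Submodule.range_subtype _).symm
  have := subsingleton_of_supportDim_lt hdim'
  have hsub := surjective_of_exact <| exact_map (I := maximalIdeal R) i
    (LinearMap.range f).injective_subtype (Submodule.mkQ_surjective _) hrange
  have hf := hsub.comp (map_surjective_of_supportDim_lt f.surjective_rangeRestrict hdim)
  rw [← LinearMap.coe_comp, ← map_comp, LinearMap.subtype_comp_codRestrict, map_lsmul] at hf
  exact hf z

end LocalCohomology

end CohomologicalDimension

section LocalCohomologyDual

theorem exact_lcomp_of_baer {R M N P E : Type*} [CommRing R] [AddCommGroup M] [Module R M]
    [AddCommGroup N] [Module R N] [AddCommGroup P] [Module R P] [AddCommGroup E] [Module R E]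
    (hE : Module.Baer R E) {f : M →ₗ[R] N} {g : N →ₗ[R] P} (hfg : Function.Exact f g) :
    Function.Exact (g.lcomp R E) (f.lcomp R E) := by
  refine fun φ ↦ ⟨fun hφ ↦ ?_, ?_⟩
  · have hfg' : Function.Exact f g.rangeRestrict :=
      LinearMap.exact_iff.2 (g.ker_rangeRestrict.trans hfg.linearMap_ker_eq)
    obtain ⟨ψ, rfl⟩ :=
      (LinearMap.exact_lcomp_of_exact_of_surjective E hfg' g.surjective_rangeRestrict φ).1 hφ
    obtain ⟨χ, rfl⟩ :=
      hE.extension_property (LinearMap.range g).subtype (Submodule.subtype_injective _) ψ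
    exact ⟨χ, rfl⟩
  · rintro ⟨ψ, rfl⟩
    exact LinearMap.ext fun x ↦ (congrArg ψ (hfg.apply_apply_eq_zero x)).trans (map_zero ψ)

theorem ringKrullDim_quotient_eq_zero_iff {R : Type*} [CommRing R] [IsLocalRing R] {p : Ideal R}
    [p.IsPrime] : ringKrullDim (R ⧸ p) = 0 ↔ p = maximalIdeal R := by
  refine ⟨fun h ↦ ?_, ?_⟩
  · have := Ring.krullDimLE_iff.2 h.le
    exact eq_maximalIdeal (Ideal.Quotient.maximal_of_isField p Ring.KrullDimLE.isField_of_isDomain)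
  · rintro rfl
    exact ringKrullDim_eq_zero_of_field (ResidueField R)

theorem exists_mem_support_le_ringKrullDim {R N : Type*} [CommRing R] [AddCommGroup N]
    [Module R N] {i : ℕ} (h : i ≤ Module.supportDim R N) :
    ∃ q ∈ Module.support R N, i ≤ ringKrullDim (R ⧸ q.asIdeal) := by
  obtain ⟨l, hl⟩ := Order.le_krullDim_iff.1 h
  refine ⟨l.head.1, l.head.2, ?_⟩
  rw [ringKrullDim_quotient, Order.le_krullDim_iff]
  exact ⟨⟨l.length, fun j ↦ ⟨(l j).1, fun _ hx ↦ LTSeries.head_le l j hx⟩, fun j ↦ l.step j⟩, hl⟩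

theorem supportDim_quotSMulTop_quotSMulTop_lt {R : Type*} [CommRing R] {p : Ideal R}
    {d : ℕ} {h z : R}
    (hz : ∀ q : Ideal R, q.IsPrime → p ≤ q → h ∈ q → z ∈ q → ringKrullDim (R ⧸ q) < d) :
    Module.supportDim R (QuotSMulTop z (QuotSMulTop h (R ⧸ p))) < d := by
  by_contra! hcon
  obtain ⟨q, hq, hdq⟩ := exists_mem_support_le_ringKrullDim hcon
  rw [Module.support_quotSMulTop, Module.support_quotSMulTop, Module.support_of_algebra,
    Ideal.Quotient.algebraMap_eq, Ideal.mk_ker] at hq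
  obtain ⟨⟨hpq, hhq⟩, hzq⟩ := hq
  exact (hz q.asIdeal q.2 hpq (hhq rfl) (hzq rfl)).not_ge hdq

theorem ringKrullDim_quotient_succ_le_of_lt {R : Type*} [CommRing R] {p q : Ideal R} [p.IsPrime]
    (hpq : p < q) : ringKrullDim (R ⧸ q) + 1 ≤ ringKrullDim (R ⧸ p) := by
  obtain ⟨r, hrq, hrp⟩ := SetLike.exists_of_lt hpq
  exact ringKrullDim_succ_le_of_surjective (Ideal.Quotient.factor hpq.le)
    (Ideal.Quotient.factor_surjective hpq.le) (r := Ideal.Quotient.mk p r)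
    (mem_nonZeroDivisors_of_ne_zero fun h ↦ hrp (Ideal.Quotient.eq_zero_iff_mem.1 h))
    (Ideal.Quotient.eq_zero_iff_mem.2 hrq)

theorem exists_isPrime_ringKrullDim_quotient_eq {R : Type*} [CommRing R] [IsLocalRing R]
    [IsNoetherianRing R] {p : Ideal R} [p.IsPrime] {u : R} (hup : u ∉ p) (hu : u ∈ maximalIdeal R)
    {e : ℕ} (hdim : ringKrullDim (R ⧸ p) = (e + 1 : ℕ)) :
    ∃ q : Ideal R, q.IsPrime ∧ p ≤ q ∧ u ∈ q ∧ ringKrullDim (R ⧸ q) = e := by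
  have hreg := isSMulRegular_of_linearEquiv_quotient (LinearEquiv.refl R (R ⧸ p)) hup
  have hdimu := Module.supportDim_quotSMulTop_succ_eq_supportDim hreg hu
  rw [Module.supportDim_quotient_eq_ringKrullDim, hdim, Nat.cast_add, Nat.cast_one,
    ENat.WithBot.add_one_cancel] at hdimu
  obtain ⟨q, hq, hle⟩ := exists_mem_support_le_ringKrullDim hdimu.ge
  rw [Module.support_quotSMulTop, Module.support_of_algebra, Ideal.Quotient.algebraMap_eq,
    Ideal.mk_ker] at hq
  obtain ⟨hpq, huq⟩ := hq
  refine ⟨q.asIdeal, q.2, hpq, huq rfl, le_antisymm ?_ hle⟩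
  have hlt := ringKrullDim_quotient_succ_le_of_lt
    (SetLike.lt_iff_le_and_exists.2 ⟨hpq, u, huq rfl, hup⟩)
  rw [hdim] at hlt
  exact ENat.WithBot.add_le_add_one_right_iff.1 hlt

theorem exists_mem_forall_notMem_of_not_le {R : Type*} [CommRing R] {S : Set (Ideal R)}
    (hS : S.Finite) (hprime : ∀ p ∈ S, p.IsPrime) {I : Ideal R} (hI : ∀ p ∈ S, ¬ I ≤ p) :
    ∃ u ∈ I, ∀ p ∈ S, u ∉ p := by
  by_contra! hcon
  obtain ⟨p, hp, hle⟩ :=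
    (I.subset_union_prime_finite hS (f := id) 0 0 fun p hp _ _ ↦ hprime p hp).1 fun u hu ↦
      Set.mem_iUnion₂.2 (by simpa using hcon u hu)
  exact hI p hp hle

theorem exists_mem_maximalIdeal_notMem_associatedPrimes {R : Type*} [CommRing R] [IsLocalRing R]
    [IsNoetherianRing R] (M : Type*) [AddCommGroup M] [Module R M] [Module.Finite R M]
    {p : Ideal R} [hp : p.IsPrime] (hpm : p ≠ maximalIdeal R) :
    ∃ u ∈ maximalIdeal R, u ∉ p ∧ ∀ q ∈ associatedPrimes R M, q ≠ maximalIdeal R → u ∉ q := by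
  let S : Set (Ideal R) := insert p (associatedPrimes R M \ {maximalIdeal R})
  have hS : S.Finite := ((associatedPrimes.finite R M).subset Set.sdiff_subset).insert p
  have hprime : ∀ q ∈ S, q.IsPrime := by
    rintro q (rfl | hq)
    exacts [hp, hq.1.isPrime]
  have hmax : ∀ q ∈ S, ¬ maximalIdeal R ≤ q := by
    intro q hq hle
    obtain rfl := le_antisymm (le_maximalIdeal (hprime q hq).ne_top) hle
    obtain rfl | hq := hq
    exacts [hpm rfl, hq.2 rfl]
  obtain ⟨u, hu, hu'⟩ := exists_mem_forall_notMem_of_not_le hS hprime hmax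
  exact ⟨u, hu, hu' p (Or.inl rfl), fun q hq hqm ↦ hu' q (Or.inr ⟨hq, hqm⟩)⟩

variable {R : Type u} [CommRing R] [IsLocalRing R]

/-- The dual `Hom(Hⁱ_𝔪(N), E)` of local cohomology with support in the maximal ideal. When `E` is
an injective hull of the residue field this is the Matlis dual; over a complete ring and for
`i = dim N` it then plays the role of the canonical module of `N`. -/
abbrev LocalCohomologyDual (R : Type u) [CommRing R] [IsLocalRing R] (E : Type u) [AddCommGroup E]
    [Module R E] (i : ℕ) (N : Type u) [AddCommGroup N] [Module R N] : Type u :=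
  LocalCohomology (maximalIdeal R) i N →ₗ[R] E

namespace LocalCohomologyDual

variable {E : Type u} [AddCommGroup E] [Module R E] {N : Type u} [AddCommGroup N] [Module R N]

theorem smul_eq_zero {i : ℕ} {r : R} (hr : ∀ y : N, r • y = 0) (φ : LocalCohomologyDual R E i N) :
    r • φ = 0 :=
  LinearMap.ext fun z ↦ by
    rw [LinearMap.smul_apply, ← map_smul, LocalCohomology.smul_eq_zero _ i hr, map_zero,
      LinearMap.zero_apply]

instance (i : ℕ) : IsHausdorff (maximalIdeal R) (LocalCohomologyDual R E i N) where
  haus' φ hφ := by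
    ext z
    obtain ⟨n, hn⟩ := LocalCohomology.exists_forall_mem_pow_smul_eq_zero z
    refine Submodule.smul_induction_on (p := fun ψ ↦ ψ z = 0) (SModEq.zero.1 (hφ n))
      (fun r hr ψ _ ↦ ?_) fun ψ χ hψ hχ ↦ ?_
    · rw [LinearMap.smul_apply, ← map_smul, hn r hr, map_zero]
    · rw [LinearMap.add_apply, hψ, hχ, add_zero]

theorem lcomp_lsmul (i : ℕ) (u : R) :
    (LinearMap.lsmul R (LocalCohomology (maximalIdeal R) i N) u).lcomp R E =
      LinearMap.lsmul R (LocalCohomologyDual R E i N) u := by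
  ext φ z
  exact map_smul φ u z

theorem exists_exact_lsmul (hE : Module.Baer R E) (i : ℕ) {u : R} (hu : IsSMulRegular N u) :
    ∃ δ : LocalCohomologyDual R E (i + 1) N →ₗ[R] LocalCohomologyDual R E i (QuotSMulTop u N),
      Function.Exact (LinearMap.lsmul R (LocalCohomologyDual R E (i + 1) N) u) δ ∧
        Function.Exact δ ((LocalCohomology.map (maximalIdeal R) i
          (u • (⊤ : Submodule R N)).mkQ).lcomp R E) := by
  obtain ⟨δ, h, h'⟩ := LocalCohomology.exists_connecting_exact_lsmul (maximalIdeal R) i hu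
  rw [← lcomp_lsmul]
  exact ⟨δ.lcomp R E, exact_lcomp_of_baer hE h', exact_lcomp_of_baer hE h⟩

theorem subsingleton_zero {u : R} (hu : u ∈ maximalIdeal R) (hreg : IsSMulRegular N u) :
    Subsingleton (LocalCohomologyDual R E 0 N) :=
  have := LocalCohomology.subsingleton_of_smul_injective hu
    (LocalCohomology.isSMulRegular_zero _ hreg)
  inferInstance

theorem isSMulRegular_quotSMulTop (hE : Module.Baer R E) {i : ℕ} {u v : R}
    (hu : IsSMulRegular N u) (hv : IsSMulRegular (LocalCohomologyDual R E i (QuotSMulTop u N)) v) :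
    IsSMulRegular (QuotSMulTop u (LocalCohomologyDual R E (i + 1) N)) v := by
  obtain ⟨δ, h, -⟩ := exists_exact_lsmul hE i hu
  have hker : u • (⊤ : Submodule R (LocalCohomologyDual R E (i + 1) N)) = LinearMap.ker δ := by
    rw [h.linearMap_ker_eq, LinearMap.range_eq_map]
    rfl
  refine (isSMulRegular_quotient_iff_mem_of_smul_mem _ v).2 fun φ hφ ↦ ?_
  rw [hker, LinearMap.mem_ker, map_smul] at hφ
  rw [hker, LinearMap.mem_ker]
  exact hv.right_eq_zero_of_smul hφ

theorem isSMulRegular_of_smul_surjective {i : ℕ} {v : R}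
    (hv : ∀ z : LocalCohomology (maximalIdeal R) i N, ∃ w, v • w = z) :
    IsSMulRegular (LocalCohomologyDual R E i N) v := fun φ ψ h ↦ LinearMap.ext fun z ↦ by
  obtain ⟨w, rfl⟩ := hv z
  rw [map_smul, map_smul]
  exact LinearMap.congr_fun h w

variable [IsNoetherianRing R]

/-- The evaluation isomorphism `H⁰_𝔪(k) ≃ k`, dualized. -/
noncomputable def residueFieldEquiv :
    LocalCohomologyDual R E 0 (ResidueField R) ≃ₗ[R] (ResidueField R →ₗ[R] E) :=
  (LinearEquiv.ofBijective (LocalCohomology.eval (maximalIdeal R) (ResidueField R))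
    ⟨LocalCohomology.eval_injective, LocalCohomology.eval_surjective (n := 1) fun _ hr ↦
      smul_quotient_eq_zero (pow_one (maximalIdeal R) ▸ hr)⟩).congrLeft E R

theorem finite_residueField [Module.Finite R (ResidueField R →ₗ[R] E)] (i : ℕ) :
    Module.Finite R (LocalCohomologyDual R E i (ResidueField R)) := by
  cases i with
  | zero => exact Module.Finite.equiv residueFieldEquiv.symm
  | succ i =>
    have := LocalCohomology.subsingleton_succ_of_torsion (I := maximalIdeal R) (n := 1)
      (N := ResidueField R) (fun _ hr ↦ smul_quotient_eq_zero (pow_one (maximalIdeal R) ▸ hr)) i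
    infer_instance

theorem finite_succ [IsPrecomplete (maximalIdeal R) R] (hE : Module.Baer R E) {i : ℕ} {u : R}
    (hu : u ∈ maximalIdeal R) (hreg : IsSMulRegular N u)
    (hfin : Module.Finite R (LocalCohomologyDual R E i (QuotSMulTop u N))) :
    Module.Finite R (LocalCohomologyDual R E (i + 1) N) := by
  obtain ⟨δ, h, -⟩ := exists_exact_lsmul hE i hreg
  have hker : LinearMap.ker δ ≤ maximalIdeal R • ⊤ := by
    rw [h.linearMap_ker_eq]
    rintro _ ⟨φ, rfl⟩
    exact Submodule.smul_mem_smul hu trivial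
  have := Module.Finite.equiv δ.quotKerEquivRange.symm
  have := Module.Finite.of_surjective _ (Submodule.factor_surjective hker)
  exact finite_of_finite_quotient_smul_top (maximalIdeal R)

theorem finite [IsPrecomplete (maximalIdeal R) R] [Module.Finite R (ResidueField R →ₗ[R] E)]
    (hE : Module.Baer R E) (i : ℕ) [hN : Module.Finite R N] :
    Module.Finite R (LocalCohomologyDual R E i N) := by
  induction i using Nat.strong_induction_on generalizing N with | _ i ih
  refine IsNoetherianRing.induction_on_isQuotientEquivQuotientPrime R hN
    (motive := fun N _ _ _ ↦ Module.Finite R (LocalCohomologyDual R E i N)) ?_ ?_ ?_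
  · intros
    infer_instance
  · intro N _ _ _ p e
    by_cases hp : p.asIdeal = maximalIdeal R
    · have := finite_residueField (R := R) (E := E) i
      let e' : N ≃ₗ[R] ResidueField R := e.trans (Submodule.quotEquivOfEq _ _ hp)
      exact Module.Finite.equiv
        ((LocalCohomology.congr (maximalIdeal R) i e').symm.congrLeft E R)
    · obtain ⟨u, hu, hup⟩ := exists_mem_maximalIdeal_notMem hp
      have hreg := isSMulRegular_of_linearEquiv_quotient e hup
      cases i with
      | zero =>
        have := subsingleton_zero (E := E) hu hreg
        infer_instance
      | succ i => exact finite_succ hE hu hreg (ih i i.lt_succ_self)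
  · intro N₁ _ _ _ N₂ _ _ _ N₃ _ _ _ f g hf hg hfg h₁ h₃
    have hex := exact_lcomp_of_baer hE
      (LocalCohomology.exact_map (I := maximalIdeal R) i hf hg hfg)
    have := isNoetherian_of_range_eq_ker _ _ hex.linearMap_ker_eq.symm
    infer_instance

theorem isSMulRegular_of_notMem {e : ℕ} {p : Ideal R} [p.IsPrime]
    (hdim : ringKrullDim (R ⧸ p) = e) {v : R} (hv : v ∉ p) :
    IsSMulRegular (LocalCohomologyDual R E e (R ⧸ p)) v := by
  by_cases hvm : v ∈ maximalIdeal R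
  · rw [← Module.supportDim_quotient_eq_ringKrullDim] at hdim
    have hreg := isSMulRegular_of_linearEquiv_quotient (LinearEquiv.refl R (R ⧸ p)) hv
    have hlt : Module.supportDim R (R ⧸ p) < (e + 1 : ℕ) := hdim ▸ by exact_mod_cast e.lt_succ_self
    exact isSMulRegular_of_smul_surjective (LocalCohomology.smul_surjective_of_supportDim_lt hlt
      (LocalCohomology.supportDim_quotSMulTop_lt hreg hvm hlt))
  · exact (not_not.1 hvm : IsUnit v).isSMulRegular _

theorem eq_of_isAssociatedPrime {e : ℕ} {p P : Ideal R} [p.IsPrime]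
    (hdim : ringKrullDim (R ⧸ p) = e)
    (hP : IsAssociatedPrime P (LocalCohomologyDual R E e (R ⧸ p))) : P = p := by
  obtain ⟨hPp, φ, rfl⟩ := isAssociatedPrime_iff.1 hP
  refine le_antisymm (fun v hv ↦ ?_) fun v hv ↦ ?_
  · rw [Submodule.mem_colon_singleton, Submodule.mem_bot] at hv
    by_contra hvp
    refine hPp.ne_top ((Ideal.eq_top_iff_one _).2 ?_)
    rw [Submodule.mem_colon_singleton, Submodule.mem_bot, one_smul]
    exact (isSMulRegular_of_notMem hdim hvp).right_eq_zero_of_smul hv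
  · rw [Submodule.mem_colon_singleton, Submodule.mem_bot]
    exact smul_eq_zero (smul_quotient_eq_zero hv) φ

theorem exists_injective_of_subsingleton (hE : Module.Baer R E) {e : ℕ} {p q : Ideal R}
    [p.IsPrime] (hpq : p ≤ q) {u : R} (hu : u ∈ maximalIdeal R) (hup : u ∉ p) (huq : u ∈ q)
    (hdim : ringKrullDim (R ⧸ p) = (e + 1 : ℕ))
    [Subsingleton (LocalCohomologyDual R E (e + 1) (R ⧸ p))] :
    ∃ j : LocalCohomologyDual R E e (R ⧸ q) →ₗ[R] LocalCohomologyDual R E e (R ⧸ p),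
      Function.Injective j := by
  have hreg := isSMulRegular_of_linearEquiv_quotient (LinearEquiv.refl R (R ⧸ p)) hup
  have hle : u • (⊤ : Submodule R (R ⧸ p)) ≤ LinearMap.ker (Submodule.factor hpq) := by
    rintro _ ⟨y, -, rfl⟩
    exact (map_smul _ u y).trans (smul_quotient_eq_zero huq _)
  let g : QuotSMulTop u (R ⧸ p) →ₗ[R] R ⧸ q := Submodule.liftQ _ (Submodule.factor hpq) hle
  have hg : Function.Surjective g :=
    Function.Surjective.of_comp (g := (u • (⊤ : Submodule R (R ⧸ p))).mkQ)
      (Submodule.factor_surjective hpq)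
  rw [← Module.supportDim_quotient_eq_ringKrullDim] at hdim
  have hdimu : Module.supportDim R (QuotSMulTop u (R ⧸ p)) < (e + 1 : ℕ) :=
    LocalCohomology.supportDim_quotSMulTop_lt hreg hu (hdim ▸ by exact_mod_cast e.succ.lt_succ_self)
  obtain ⟨δ, -, hδ⟩ := exists_exact_lsmul hE e hreg
  exact ⟨(LocalCohomology.map (maximalIdeal R) e _).lcomp R E ∘ₗ
      (LocalCohomology.map (maximalIdeal R) e g).lcomp R E,
    (injective_of_exact hδ).comp <| LinearMap.lcomp_injective_of_surjective _ <|
      LocalCohomology.map_surjective_of_supportDim_lt hg hdimu⟩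

theorem nontrivial [IsPrecomplete (maximalIdeal R) R] (hE : Module.Baer R E)
    [Module.Finite R (ResidueField R →ₗ[R] E)] [Nontrivial (ResidueField R →ₗ[R] E)] {e : ℕ}
    {p : Ideal R} [p.IsPrime] (hdim : ringKrullDim (R ⧸ p) = e) :
    Nontrivial (LocalCohomologyDual R E e (R ⧸ p)) := by
  induction e generalizing p with
  | zero =>
    obtain rfl := ringKrullDim_quotient_eq_zero_iff.1 (by exact_mod_cast hdim)
    exact residueFieldEquiv.nontrivial
  | succ e ih =>
    have hpm : p ≠ maximalIdeal R := fun hp ↦ by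
      rw [ringKrullDim_quotient_eq_zero_iff.2 hp] at hdim
      exact absurd hdim (by exact_mod_cast e.succ_ne_zero.symm)
    by_contra hcon
    rw [not_nontrivial_iff_subsingleton] at hcon
    have hfin := finite hE e (N := R ⧸ p)
    obtain ⟨u, hu, hup, hass⟩ := exists_mem_maximalIdeal_notMem_associatedPrimes
      (LocalCohomologyDual R E e (R ⧸ p)) hpm
    obtain ⟨q, hq, hpq, huq, hqdim⟩ := exists_isPrime_ringKrullDim_quotient_eq hup hu hdim
    obtain ⟨j, hj⟩ := exists_injective_of_subsingleton hE hpq hu hup huq hdim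
    have := ih hqdim
    obtain ⟨P, hP⟩ := associatedPrimes.nonempty R (LocalCohomologyDual R E e (R ⧸ q))
    obtain rfl := eq_of_isAssociatedPrime hqdim hP
    have hqm : P = maximalIdeal R :=
      by_contra fun hne ↦ hass P (hP.map_of_injective j hj) hne huq
    obtain rfl : e = 0 := by
      exact_mod_cast hqdim.symm.trans (ringKrullDim_quotient_eq_zero_iff.2 hqm)
    have := subsingleton_zero (E := E) hu
      (isSMulRegular_of_linearEquiv_quotient (LinearEquiv.refl R (R ⧸ p)) hup)
    exact not_subsingleton _ hj.subsingleton

end LocalCohomologyDual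

theorem exists_finite_isSMulRegular_quotSMulTop [IsNoetherianRing R]
    [IsPrecomplete (maximalIdeal R) R] {p : Ideal R} [p.IsPrime] {d : ℕ}
    (hd : ringKrullDim (R ⧸ p) = (d + 1 : ℕ)) {h z : R} (hhp : h ∉ p) (hhm : h ∈ maximalIdeal R)
    (hz : ∀ q : Ideal R, q.IsPrime → p ≤ q → h ∈ q → z ∈ q → ringKrullDim (R ⧸ q) < d) :
    ∃ (K : Type u) (_ : AddCommGroup K) (_ : Module R K), Module.Finite R K ∧ Nontrivial K ∧
      (∀ t ∉ p, IsSMulRegular K t) ∧ IsSMulRegular (QuotSMulTop h K) z := by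
  have : IsSimpleModule R (ResidueField R) :=
    isSimpleModule_iff_quot_maximal.2 ⟨_, inferInstance, ⟨LinearEquiv.refl R _⟩⟩
  obtain ⟨E, _, _, hE, _, _⟩ := exists_baer_finite_hom (R := R) (ResidueField R)
  have hreg := isSMulRegular_of_linearEquiv_quotient (LinearEquiv.refl R (R ⧸ p)) hhp
  have hlt : Module.supportDim R (QuotSMulTop h (R ⧸ p)) < (d + 1 : ℕ) := by
    refine LocalCohomology.supportDim_quotSMulTop_lt hreg hhm ?_
    rw [Module.supportDim_quotient_eq_ringKrullDim, hd]
    exact_mod_cast (d + 1).lt_succ_self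
  have hltz := supportDim_quotSMulTop_quotSMulTop_lt hz
  have hzreg : IsSMulRegular (LocalCohomologyDual R E d (QuotSMulTop h (R ⧸ p))) z :=
    LocalCohomologyDual.isSMulRegular_of_smul_surjective
      (LocalCohomology.smul_surjective_of_supportDim_lt hlt hltz)
  exact ⟨LocalCohomologyDual R E (d + 1) (R ⧸ p), inferInstance, inferInstance,
    LocalCohomologyDual.finite hE (d + 1), LocalCohomologyDual.nontrivial hE hd,
    fun t ht ↦ LocalCohomologyDual.isSMulRegular_of_notMem hd ht,
    LocalCohomologyDual.isSMulRegular_quotSMulTop hE hreg hzreg⟩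

end LocalCohomologyDual

section DeterminantTrick

open Polynomial

variable {C K : Type*} [CommRing C] [AddCommGroup K] [Module C K] {h z a : C}

theorem exists_monic_eval_scaleRoots_smul_eq_zero [Module.Finite C K] (hh : IsSMulRegular K h)
    (ha : ∀ x : K, ∃ y, h • y = a • x) :
    ∃ q : C[X], q.Monic ∧ ∀ x : K, (q.scaleRoots h).eval a • x = 0 := by
  choose f hf using ha
  let φ : Module.End C K :=
    { toFun := f
      map_add' := fun x y ↦ hh <| show h • f (x + y) = h • (f x + f y) by
        rw [smul_add, hf, hf, hf, smul_add]
      map_smul' := fun c x ↦ hh <| show h • f (c • x) = h • c • f x by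
        rw [hf, smul_comm h c, hf, smul_comm] }
  have hφ : algebraMap C (Module.End C K) h * φ = algebraMap C (Module.End C K) a :=
    LinearMap.ext hf
  obtain ⟨q, hq, hqφ⟩ := LinearMap.exists_monic_and_aeval_eq_zero C φ
  refine ⟨q, hq, fun x ↦ ?_⟩
  rw [← Module.algebraMap_end_apply (S := C), ← aeval_algebraMap_apply_eq_algebraMap_eval, ← hφ,
    scaleRoots_aeval_eq_zero hqφ, LinearMap.zero_apply]

theorem exists_eq_pow_smul_of_smul_eq (hh : IsSMulRegular K h)
    (hz : IsSMulRegular (QuotSMulTop h K) z) {i : ℕ} {x y : K} (hxy : z • x = h ^ i • y) :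
    ∃ y', x = h ^ i • y' := by
  induction i generalizing x y with
  | zero => exact ⟨x, by rw [pow_zero, one_smul]⟩
  | succ i ih =>
    have hx : x ∈ h • (⊤ : Submodule C K) := by
      refine (isSMulRegular_quotient_iff_mem_of_smul_mem _ z).1 hz x ?_
      rw [hxy, pow_succ', mul_smul]
      exact Submodule.smul_mem_pointwise_smul _ _ _ trivial
    obtain ⟨x', -, rfl⟩ := Submodule.mem_smul_pointwise_iff_exists _ _ _ |>.1 hx
    have hx' : z • x' = h ^ i • y := hh <| show h • z • x' = h • h ^ i • y by
      rw [smul_comm h z, hxy, pow_succ', mul_smul]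
    obtain ⟨y', rfl⟩ := ih hx'
    exact ⟨y', by rw [pow_succ', mul_smul]⟩

/-- The submodule of all `κ ∈ K` with `(w / h) ^ i • κ ∈ K` for every `i`, where `K` is viewed
inside its localization at `h`. -/
def powFractionSubmodule (K : Type*) [AddCommGroup K] [Module C K] (h w : C) : Submodule C K :=
  ⨅ i : ℕ, (h ^ i • (⊤ : Submodule C K)).comap (LinearMap.lsmul C K (w ^ i))

theorem mem_powFractionSubmodule {w : C} {κ : K} :
    κ ∈ powFractionSubmodule K h w ↔ ∀ i : ℕ, ∃ y : K, h ^ i • y = w ^ i • κ := by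
  simp [powFractionSubmodule, Submodule.mem_smul_pointwise_iff_exists]

theorem exists_mem_powFractionSubmodule_smul_eq (hh : IsSMulRegular K h)
    (hz : IsSMulRegular (QuotSMulTop h K) z) {κ : K} (hκ : κ ∈ powFractionSubmodule K h (z * a)) :
    ∃ y ∈ powFractionSubmodule K h (z * a), h • y = a • κ := by
  rw [mem_powFractionSubmodule] at hκ
  have hpow (i : ℕ) : ∃ y, (z * a) ^ i • a • κ = h ^ (i + 1) • y := by
    obtain ⟨y, hy⟩ := hκ (i + 1)
    refine exists_eq_pow_smul_of_smul_eq hh hz (y := y) ?_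
    rw [hy, smul_smul, smul_smul]
    ring_nf
  obtain ⟨y, hy⟩ := hpow 0
  rw [pow_zero, one_smul, zero_add, pow_one] at hy
  refine ⟨y, mem_powFractionSubmodule.2 fun i ↦ ?_, hy.symm⟩
  obtain ⟨y', hy'⟩ := hpow i
  refine ⟨y', hh <| show h • h ^ i • y' = h • (z * a) ^ i • y from ?_⟩
  rw [smul_comm h _ y, ← hy, hy', pow_succ', mul_smul]

theorem IsIntegralOverPrincipal.exists_pow_smul_mem {w : C} (hw : IsIntegralOverPrincipal h w) :
    ∃ n : ℕ, ∀ x : K, h ^ n • x ∈ powFractionSubmodule K h w := by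
  obtain ⟨n, hn⟩ := hw.exists_pow_dvd
  refine ⟨n, fun x ↦ mem_powFractionSubmodule.2 fun i ↦ ?_⟩
  obtain ⟨c, hc⟩ := hn i
  exact ⟨c • x, by rw [smul_smul, ← hc, smul_smul, mul_comm]⟩

-- Multiplication by `a / h` preserves the nonzero finite module `powFractionSubmodule K h (z * a)`.
theorem exists_monic_eval_scaleRoots_mem [IsNoetherianRing C] {p : Ideal C} [p.IsPrime]
    [Module.Finite C K] [Nontrivial K] (hK : ∀ t ∉ p, IsSMulRegular K t) (hh : h ∉ p)
    (hz : IsSMulRegular (QuotSMulTop h K) z) (hza : IsIntegralOverPrincipal h (z * a)) :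
    ∃ q : C[X], q.Monic ∧ (q.scaleRoots h).eval a ∈ p := by
  have hreg : IsSMulRegular (powFractionSubmodule K h (z * a)) h :=
    (hK h hh).submodule _ _
  obtain ⟨q, hq, hqa⟩ := exists_monic_eval_scaleRoots_smul_eq_zero hreg (a := a) fun κ ↦ by
    obtain ⟨y, hy, hyκ⟩ := exists_mem_powFractionSubmodule_smul_eq (hK h hh) hz κ.2
    exact ⟨⟨y, hy⟩, Subtype.ext hyκ⟩
  refine ⟨q, hq, by_contra fun hqp ↦ ?_⟩
  obtain ⟨n, hn⟩ := hza.exists_pow_smul_mem (K := K)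
  obtain ⟨x, hx⟩ := exists_ne (0 : K)
  have hx0 : h ^ n • x = 0 :=
    (hK _ hqp).right_eq_zero_of_smul (congrArg Subtype.val (hqa ⟨_, hn x⟩))
  exact hx (((hK h hh).pow n).right_eq_zero_of_smul hx0)

end DeterminantTrick

section AssociatedPrimes

theorem exists_mem_forall_minimalPrimes_notMem {A C : Type*} [CommRing A] [CommRing C]
    [Algebra A C] [Algebra.HasGoingDown A C] [IsNoetherianRing C] {P₀ P : Ideal A} [P₀.IsPrime]
    (hlt : P₀ < P) {h : A} (hh : h ∈ P₀) :
    ∃ z ∈ P, ∀ Q ∈ (Ideal.span {algebraMap A C h}).minimalPrimes, algebraMap A C z ∉ Q := by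
  let S := Ideal.comap (algebraMap A C) '' (Ideal.span {algebraMap A C h}).minimalPrimes
  have hprime : ∀ p ∈ S, p.IsPrime := by
    rintro _ ⟨Q, hQ, rfl⟩
    have : Q.IsPrime := hQ.1.1
    exact Ideal.comap_isPrime _ Q
  have hS : S.Finite := (Ideal.finite_minimalPrimes_of_isNoetherianRing C _).image _
  obtain ⟨z, hzP, hz⟩ := exists_mem_forall_notMem_of_not_le hS hprime (I := P) <| by
    rintro _ ⟨Q, hQ, rfl⟩ hle
    have : Q.IsPrime := hQ.1.1
    have : Q.LiesOver (Q.under A) := ⟨rfl⟩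
    obtain ⟨Q₀, hQ₀, hprime₀, hover⟩ := Ideal.exists_ideal_lt_liesOver_of_lt Q (hlt.trans_le hle)
    have hhQ₀ : algebraMap A C h ∈ Q₀ := by rwa [hover.over] at hh
    exact hQ₀.not_ge (hQ.2 ⟨hprime₀, (Ideal.span_singleton_le_iff_mem _).2 hhQ₀⟩ hQ₀.le)
  exact ⟨z, hzP, fun Q hQ ↦ hz _ ⟨Q, hQ, rfl⟩⟩

variable {C : Type u} [CommRing C] {h z a : C}

theorem ringKrullDim_quotient_add_two_le (hh : h ∈ nonZeroDivisors C)
    (hz : ∀ Q ∈ (Ideal.span {h}).minimalPrimes, z ∉ Q) {q : Ideal C} [q.IsPrime] (hhq : h ∈ q)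
    (hzq : z ∈ q) : ringKrullDim (C ⧸ q) + 1 + 1 ≤ ringKrullDim C := by
  obtain ⟨Q, hQ, hQq⟩ := Ideal.exists_minimalPrimes_le
    ((Ideal.span_singleton_le_iff_mem q).2 hhq)
  have : Q.IsPrime := hQ.1.1
  have hhQ : h ∈ Q := hQ.1.2 (Ideal.mem_span_singleton_self h)
  obtain ⟨p, hp, hpQ⟩ := Ideal.exists_minimalPrimes_le (bot_le : ⊥ ≤ Q)
  have : p.IsPrime := hp.1.1
  have hhp : h ∉ p := fun hhp ↦ notMem_nonZeroDivisors_of_mem_mem_minimalPrimes hhp hp hh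
  have hQq' : Q < q := SetLike.lt_iff_le_and_exists.2 ⟨hQq, z, hzq, hz Q hQ⟩
  have hpQ' : p < Q := SetLike.lt_iff_le_and_exists.2 ⟨hpQ, h, hhQ, hhp⟩
  calc ringKrullDim (C ⧸ q) + 1 + 1
      ≤ ringKrullDim (C ⧸ Q) + 1 := by gcongr; exact ringKrullDim_quotient_succ_le_of_lt hQq'
    _ ≤ ringKrullDim (C ⧸ p) := ringKrullDim_quotient_succ_le_of_lt hpQ'
    _ ≤ ringKrullDim C := ringKrullDim_quotient_le p

theorem exists_ringKrullDim_eq_succ [IsLocalRing C] [IsNoetherianRing C]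
    (hh : h ∈ nonZeroDivisors C) (hhm : h ∈ maximalIdeal C) :
    ∃ d : ℕ, ringKrullDim C = (d + 1 : ℕ) := by
  have : Nontrivial (C ⧸ Ideal.span {h}) :=
    Ideal.Quotient.nontrivial_iff.2 (Ideal.span_singleton_eq_top.not.2 hhm)
  have : IsLocalRing (C ⧸ Ideal.span {h}) :=
    .of_surjective' (Ideal.Quotient.mk _) Ideal.Quotient.mk_surjective
  refine ⟨(LTSeries.longestOf (PrimeSpectrum (C ⧸ Ideal.span {h}))).length, ?_⟩
  rw [← ringKrullDim_quotient_span_singleton_succ_eq_ringKrullDim_of_mem_nonZeroDivisors hh hhm,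
    ringKrullDim, Order.krullDim_eq_length_of_finiteDimensionalOrder]
  norm_cast

variable [IsLocalRing C] [IsNoetherianRing C] [IsPrecomplete (maximalIdeal C) C]

theorem IsIntegralOverPrincipal.of_mul_left
    (hC : ∀ p ∈ minimalPrimes C, ringKrullDim (C ⧸ p) = ringKrullDim C)
    (hh : h ∈ nonZeroDivisors C) (hhm : h ∈ maximalIdeal C)
    (hz : ∀ Q ∈ (Ideal.span {h}).minimalPrimes, z ∉ Q)
    (hza : IsIntegralOverPrincipal h (z * a)) : IsIntegralOverPrincipal h a := by
  refine isIntegralOverPrincipal_of_forall_minimalPrimes fun p hp ↦ ?_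
  have : p.IsPrime := hp.1.1
  have hhp : h ∉ p := fun hhp ↦ notMem_nonZeroDivisors_of_mem_mem_minimalPrimes hhp hp hh
  obtain ⟨d, hd⟩ := exists_ringKrullDim_eq_succ hh hhm
  have hdim : ∀ q : Ideal C, q.IsPrime → p ≤ q → h ∈ q → z ∈ q → ringKrullDim (C ⧸ q) < d := by
    intro q _ _ hhq hzq
    have hle := ringKrullDim_quotient_add_two_le hh hz hhq hzq
    rw [hd, Nat.cast_add, Nat.cast_one, ENat.WithBot.add_le_add_one_right_iff] at hle
    exact ENat.WithBot.add_one_le_natCast_iff.1 hle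
  obtain ⟨K, _, _, _, _, hK, hzK⟩ :=
    exists_finite_isSMulRegular_quotSMulTop ((hC p hp).trans hd) hhp hhm hdim
  exact exists_monic_eval_scaleRoots_mem hK hhp hzK hza

theorem IsIntegralOverPrincipal.of_forall_mem_mul {A : Type*} [CommRing A] [IsNoetherianRing A]
    [Algebra A C] [Module.FaithfullyFlat A C]
    (hC : ∀ p ∈ minimalPrimes C, ringKrullDim (C ⧸ p) = ringKrullDim C) {P₀ P : Ideal A}
    [P₀.IsPrime] (hlt : P₀ < P) {h a : A} (hh : h ∈ nonZeroDivisors A) (hhP₀ : h ∈ P₀)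
    (ha : ∀ z ∈ P, IsIntegralOverPrincipal h (z * a)) : IsIntegralOverPrincipal h a := by
  obtain ⟨z, hzP, hz⟩ := exists_mem_forall_minimalPrimes_notMem (C := C) hlt hhP₀
  have hhC : algebraMap A C h ∈ nonZeroDivisors C :=
    mem_nonZeroDivisors_iff_left.2 fun c hc ↦
      (Module.Flat.isSMulRegular_of_nonZeroDivisors hh).right_eq_zero_of_smul
        (by rwa [Algebra.smul_def])
  have hhm : algebraMap A C h ∈ maximalIdeal C := fun hu ↦
    Ideal.IsPrime.ne_top' (Ideal.eq_top_of_isUnit_mem P₀ hhP₀ (isUnit_of_map_unit _ h hu))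
  have hza := (ha z hzP).map (algebraMap A C)
  rw [map_mul] at hza
  exact .of_map hh (.of_mul_left hC hhC hhm hz hza)

theorem mem_minimalPrimes_span_of_isAssociatedPrime {A : Type u} [CommRing A]
    [IsNoetherianRing A] [IsLocalRing A]
    (hA : IsEquidimensionalRing (AdicCompletion (maximalIdeal A) A)) {h : A}
    (hh : h ∈ nonZeroDivisors A) {J P : Ideal A} (hJ : ∀ x, x ∈ J ↔ IsIntegralOverPrincipal h x)
    (hP : IsAssociatedPrime P (A ⧸ J)) : P ∈ (Ideal.span {h}).minimalPrimes := by
  obtain ⟨_, a, ha⟩ := isAssociatedPrime_iff.1 hP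
  obtain ⟨a, rfl⟩ := Ideal.Quotient.mk_surjective a
  have hmem : ∀ z, z ∈ P ↔ IsIntegralOverPrincipal h (z * a) := fun z ↦ by
    rw [ha, Submodule.mem_colon_singleton, Submodule.mem_bot, ← hJ]
    exact Ideal.Quotient.eq_zero_iff_mem (I := J) (a := z * a)
  have hhP : h ∈ P := (hmem h).2 ((hJ _).1 (J.mul_mem_right a ((hJ h).2 (.self h))))
  obtain ⟨P₀, hP₀, hle⟩ := Ideal.exists_minimalPrimes_le
    ((Ideal.span_singleton_le_iff_mem P).2 hhP)
  obtain hlt | rfl := hle.lt_or_eq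
  · have : P₀.IsPrime := hP₀.1.1
    have : IsNoetherianRing (AdicCompletion (maximalIdeal A) A) :=
      isNoetherianRing_adicCompletion _
    have : Module.FaithfullyFlat A (AdicCompletion (maximalIdeal A) A) :=
      .of_flat_of_isLocalHom
    have haJ : IsIntegralOverPrincipal h a := .of_forall_mem_mul hA.2 hlt hh
      (hP₀.1.2 (Ideal.mem_span_singleton_self h)) fun z ↦ (hmem z).1
    exact absurd ((hmem 1).2 (by rwa [one_mul])) (P.ne_top_iff_one.1 hP.1.ne_top)
  · exact hP₀

theorem mem_comap_smul_integralClosure_iff {A : Type*} [CommRing A] {h : A}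
    (hh : h ∈ nonZeroDivisors A) {K : Type*} [CommRing K] [Algebra A K] [IsFractionRing A K]
    {x : A} :
    x ∈ Submodule.comap (Algebra.linearMap A K)
        (algebraMap A K h • Subalgebra.toSubmodule (integralClosure A K)) ↔
      IsIntegralOverPrincipal h x := by
  rw [isIntegralOverPrincipal_iff_exists_isIntegral (K := K) hh, Submodule.mem_comap,
    Submodule.mem_smul_pointwise_iff_exists]
  rfl

theorem mem_integralClosureOfIdeal_span_iff {A : Type u} [CommRing A] {h : A}
    (hh : h ∈ nonZeroDivisors A) [Nontrivial A] {x : A} :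
    x ∈ (Ideal.span {h}).integralClosureOfIdeal ↔ IsIntegralOverPrincipal h x := by
  let J := Submodule.comap (Algebra.linearMap A (FractionRing A)) (algebraMap A (FractionRing A) h •
    Subalgebra.toSubmodule (integralClosure A (FractionRing A)))
  have hJ : ∀ y, y ∈ J ↔ IsIntegralOverPrincipal h y := fun y ↦
    mem_comap_smul_integralClosure_iff hh
  rw [← hJ, ← Ideal.span_eq J, Ideal.integralClosureOfIdeal]
  congr! 2
  ext y
  exact isIntegralOverPrincipal_iff_exists_mem_span_pow.symm.trans (hJ y).symm

theorem associated_primes_of_integral_closure_of_principal_general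
    (A : Type u) [CommRing A] [IsNoetherianRing A] [IsLocalRing A]
    (hfeq : IsEquidimensionalRing (AdicCompletion (maximalIdeal A) A))
    (h : A) (hreg : h ∈ nonZeroDivisors A)
    (K : Type v) [CommRing K] [Algebra A K] [IsFractionRing A K] :
    (∀ P : Ideal A,
      IsAssociatedPrime P (A ⧸ (Ideal.span {h} : Ideal A).integralClosureOfIdeal) →
      P ∈ (Ideal.span {h} : Ideal A).minimalPrimes) ∧
    (∀ P : Ideal A,
      IsAssociatedPrime P
        (A ⧸ Submodule.comap (Algebra.linearMap A K)
          (algebraMap A K h • Subalgebra.toSubmodule (integralClosure A K))) →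
      P ∈ (Ideal.span {h} : Ideal A).minimalPrimes) :=
  ⟨fun _ ↦ mem_minimalPrimes_span_of_isAssociatedPrime hfeq hreg fun _ ↦
      mem_integralClosureOfIdeal_span_iff hreg,
    fun _ ↦ mem_minimalPrimes_span_of_isAssociatedPrime hfeq hreg fun _ ↦
      mem_comap_smul_integralClosure_iff hreg⟩

end AssociatedPrimes

/-- (Ratliff) Let `A` be a formally equidimensional noetherian local ring (its completion
is equidimensional) and `h` a nonzerodivisor.  Then every associated prime of the
integral closure of the ideal `hA` is a minimal prime of `hA`.  In particular, if `A` is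
reduced with finite integral closure `B` in its total quotient ring `K`, every associated
prime of the `A`-ideal `hB` (the preimage in `A` of `h·B`) is minimal over `hA`. -/
theorem associated_primes_of_integral_closure_of_principal
    (A : Type u) [CommRing A] [IsNoetherianRing A] [IsLocalRing A]
    (hfeq : IsEquidimensionalRing (AdicCompletion (maximalIdeal A) A))
    (h : A) (hreg : h ∈ nonZeroDivisors A)
    (K : Type v) [CommRing K] [Algebra A K] [IsFractionRing A K]
    [IsReduced A] [Module.Finite A (integralClosure A K)] :
    (∀ P : Ideal A,
      IsAssociatedPrime P (A ⧸ (Ideal.span {h} : Ideal A).integralClosureOfIdeal) →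
      P ∈ (Ideal.span {h} : Ideal A).minimalPrimes) ∧
    (∀ P : Ideal A,
      IsAssociatedPrime P
        (A ⧸ Submodule.comap (Algebra.linearMap A K)
          (algebraMap A K h • Subalgebra.toSubmodule (integralClosure A K))) →
      P ∈ (Ideal.span {h} : Ideal A).minimalPrimes) :=
  associated_primes_of_integral_closure_of_principal_general A hfeq h hreg K
end
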